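/- arXiv:2605.08871 — 7 statements merged into one kernel-verified Lean document; each statement's English description precedes it below -/
import Mathlib

section
/- Let f : ℝ^d → ℝ be differentiable and let ∇f(·;·) be a stochastic gradient map satisfying unbiasedness, bounded variance σ², and mean-squared smoothness with constant L̄. Fix p ∈ (0,1], B ≥ 1, and points x, y ∈ ℝ^d and a vector g ∈ ℝ^d. Let ξ₁, …, ξ_B be i.i.d. samples from μ and define G = (1/B)∑_{j=1}^B ∇f(y;ξ_j) + (1−p)(g − (1/B)∑_{j=1}^B ∇f(x;ξ_j)). Then E[‖G − ∇f(y)‖²] ≤ (1−p)²‖g − ∇f(x)‖² + 2p²σ²/B + (2(1−p)²L̄²/B)‖y − x‖². -/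
open MeasureTheory ProbabilityTheory

theorem mvr_aux_pi {d : ℕ} {Ω : Type*} [MeasurableSpace Ω]
    (μ : Measure Ω) [IsProbabilityMeasure μ]
    (h : Ω → EuclideanSpace ℝ (Fin d)) (hm : Measurable h) (hi : Integrable h μ)
    (h0 : ∫ ξ, h ξ ∂μ = 0) (h2 : Integrable (fun ξ => ‖h ξ‖ ^ 2) μ)
    (B : ℕ) (s : ℝ) (c : EuclideanSpace ℝ (Fin d)) :
    (∫ ω : Fin B → Ω, ‖c + s • ∑ j, h (ω j)‖ ^ 2 ∂(Measure.pi fun _ => μ))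
      = ‖c‖ ^ 2 + s ^ 2 * (B * ∫ ξ, ‖h ξ‖ ^ 2 ∂μ) := by
  set P : Measure (Fin B → Ω) := Measure.pi fun _ => μ with hP
  have hmp : ∀ j : Fin B, MeasurePreserving (fun ω : Fin B → Ω => ω j) P μ :=
    fun j => measurePreserving_eval (fun _ => μ) j
  have hij : ∀ j : Fin B, Integrable (fun ω : Fin B → Ω => h (ω j)) P :=
    fun j => (hmp j).integrable_comp_of_integrable hi
  have hE : ∀ j : Fin B, ∫ ω, h (ω j) ∂P = 0 := fun j => by
    rw [hP, integral_comp_eval (μ := fun _ : Fin B => μ) (f := h) hm.aestronglyMeasurable, h0]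
  have hind : iIndepFun (fun (j : Fin B) (ω : Fin B → Ω) => h (ω j)) P :=
    iIndepFun_pi (μ := fun _ : Fin B => μ) (X := fun _ => h) (fun _ => hm.aemeasurable)
  have hI : ∀ i j : Fin B, Integrable (fun ω => inner ℝ (h (ω i)) (h (ω j))) P := by
    intro i j
    by_cases e : i = j
    · subst e
      simp only [real_inner_self_eq_norm_sq]
      exact (hmp i).integrable_comp_of_integrable h2
    · exact (hind.indepFun e).integrable_bilin (hij i) (hij j) (innerSL ℝ)
  have hV : ∀ i j : Fin B, ∫ ω, inner ℝ (h (ω i)) (h (ω j)) ∂P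
      = if i = j then ∫ ξ, ‖h ξ‖ ^ 2 ∂μ else 0 := by
    intro i j
    split_ifs with e
    · subst e
      simp only [real_inner_self_eq_norm_sq]
      rw [hP, integral_comp_eval (μ := fun _ : Fin B => μ) (f := fun ξ => ‖h ξ‖ ^ 2)
        h2.aestronglyMeasurable]
    · have := (hind.indepFun e).integral_bilin (hij i) (hij j) (innerSL ℝ)
      rw [hE, hE, map_zero] at this
      exact this
  have hc : ∀ j : Fin B, Integrable (fun ω => inner ℝ c (h (ω j))) P :=
    fun j => (hij j).const_inner c
  have hcE : ∀ j : Fin B, ∫ ω, inner ℝ c (h (ω j)) ∂P = 0 := fun j => by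
    rw [integral_inner (hij j), hE, inner_zero_right]
  have hexp : ∀ ω : Fin B → Ω, ‖c + s • ∑ j, h (ω j)‖ ^ 2
      = ‖c‖ ^ 2 + 2 * s * ∑ j, inner ℝ c (h (ω j))
        + s ^ 2 * ∑ i, ∑ j, inner ℝ (h (ω i)) (h (ω j)) := by
    intro ω
    rw [norm_add_sq_real, inner_smul_right, inner_sum, norm_smul, mul_pow, Real.norm_eq_abs,
      sq_abs, ← real_inner_self_eq_norm_sq (∑ j, h (ω j)), sum_inner]
    simp only [inner_sum]
    ring
  simp only [hexp]
  have i1 : Integrable (fun ω : Fin B → Ω => 2 * s * ∑ j, inner ℝ c (h (ω j))) P :=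
    (integrable_finsetSum _ fun j _ => hc j).const_mul _
  have i2 : Integrable (fun ω : Fin B → Ω =>
      s ^ 2 * ∑ i, ∑ j, inner ℝ (h (ω i)) (h (ω j))) P :=
    (integrable_finsetSum _ fun i _ => integrable_finsetSum _ fun j _ => hI i j).const_mul _
  have i3 : Integrable (fun ω : Fin B → Ω => ‖c‖ ^ 2 + 2 * s * ∑ j, inner ℝ c (h (ω j))) P :=
    (integrable_const _).add i1
  rw [integral_add i3 i2, integral_add (integrable_const _) i1,
    integral_const_mul, integral_const_mul, integral_finsetSum _ (fun j _ => hc j),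
    integral_finsetSum _ (fun i _ => integrable_finsetSum _ fun j _ => hI i j)]
  simp_rw [integral_finsetSum _ (fun j _ => hI _ j), hV, hcE]
  simp

theorem mvr_aux_var {d : ℕ} {Ω : Type*} [MeasurableSpace Ω]
    (μ : Measure Ω) [IsProbabilityMeasure μ]
    (D : Ω → EuclideanSpace ℝ (Fin d)) (hi : Integrable D μ)
    (m : EuclideanSpace ℝ (Fin d))
    (h0 : ∫ ξ, D ξ ∂μ = m) (h2 : Integrable (fun ξ => ‖D ξ‖ ^ 2) μ) :
    Integrable (fun ξ => ‖D ξ - m‖ ^ 2) μ ∧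
    ∫ ξ, ‖D ξ - m‖ ^ 2 ∂μ ≤ ∫ ξ, ‖D ξ‖ ^ 2 ∂μ := by
  have hexp : ∀ ξ, ‖D ξ - m‖ ^ 2 = ‖D ξ‖ ^ 2 - 2 * inner ℝ m (D ξ) + ‖m‖ ^ 2 := by
    intro ξ
    rw [norm_sub_sq_real, real_inner_comm]
  have i1 : Integrable (fun ξ => 2 * inner ℝ m (D ξ)) μ := (hi.const_inner m).const_mul 2
  simp only [hexp]
  refine ⟨(h2.sub i1).add (integrable_const _), ?_⟩
  have i3 : Integrable (fun ξ => ‖D ξ‖ ^ 2 - 2 * inner ℝ m (D ξ)) μ := h2.sub i1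
  rw [integral_add i3 (integrable_const _), integral_sub h2 i1, integral_const_mul,
    integral_inner hi, h0, real_inner_self_eq_norm_sq]
  simp
  nlinarith [sq_nonneg ‖m‖]

open MeasureTheory

/-- One-step MVR variance recursion: for the minibatch MVR estimator
`G = (1/B)∑ⱼ ∇f(y;ξⱼ) + (1−p)(g − (1/B)∑ⱼ ∇f(x;ξⱼ))` built from `B` i.i.d. samples,
`E‖G − ∇f(y)‖² ≤ (1−p)²‖g − ∇f(x)‖² + 2p²σ²/B + 2(1−p)²L̄²‖y − x‖²/B`. -/
theorem mvr_one_step_variance_bound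
    (d : ℕ) (hd : 1 ≤ d) {Ω : Type*} [MeasurableSpace Ω]
    (μ : Measure Ω) [IsProbabilityMeasure μ]
    (f : EuclideanSpace ℝ (Fin d) → ℝ) (hf : Differentiable ℝ f)
    (G : EuclideanSpace ℝ (Fin d) → Ω → EuclideanSpace ℝ (Fin d))
    (hGmeas : Measurable fun q : (EuclideanSpace ℝ (Fin d)) × Ω => G q.1 q.2)
    (hGint : ∀ x, Integrable (G x) μ)
    (hUnbiased : ∀ x, (∫ ξ, G x ξ ∂μ) = gradient f x)
    (σ : ℝ) (hσ : 0 ≤ σ)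
    (hVarInt : ∀ x, Integrable (fun ξ => ‖G x ξ - gradient f x‖ ^ 2) μ)
    (hVar : ∀ x, (∫ ξ, ‖G x ξ - gradient f x‖ ^ 2 ∂μ) ≤ σ ^ 2)
    (Lbar : ℝ) (hLbar : 0 < Lbar)
    (hMSint : ∀ x y, Integrable (fun ξ => ‖G x ξ - G y ξ‖ ^ 2) μ)
    (hMS : ∀ x y, (∫ ξ, ‖G x ξ - G y ξ‖ ^ 2 ∂μ) ≤ Lbar ^ 2 * ‖x - y‖ ^ 2)
    (p : ℝ) (hp : p ∈ Set.Ioc (0 : ℝ) 1)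
    (B : ℕ) (hB : 1 ≤ B)
    (x y g : EuclideanSpace ℝ (Fin d)) :
    (∫ ω : Fin B → Ω,
        ‖((B : ℝ)⁻¹ • ∑ j, G y (ω j)
            + (1 - p) • (g - (B : ℝ)⁻¹ • ∑ j, G x (ω j)))
          - gradient f y‖ ^ 2
        ∂(Measure.pi fun _ => μ))
      ≤ (1 - p) ^ 2 * ‖g - gradient f x‖ ^ 2
        + 2 * p ^ 2 * σ ^ 2 / B
        + 2 * (1 - p) ^ 2 * Lbar ^ 2 / B * ‖y - x‖ ^ 2 := by
  set a := gradient f x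
  set b := gradient f y
  have hmx : ∀ z, Measurable (G z) := fun z => hGmeas.comp measurable_prodMk_left
  set h : Ω → EuclideanSpace ℝ (Fin d) := fun ξ => (G y ξ - b) - (1 - p) • (G x ξ - a) with hh
  have hm : Measurable h := ((hmx y).sub_const b).sub (((hmx x).sub_const a).const_smul (1 - p))
  have iy : Integrable (fun ξ => G y ξ - b) μ := (hGint y).sub (integrable_const _)
  have ix : Integrable (fun ξ => (1 - p) • (G x ξ - a)) μ :=
    ((hGint x).sub (integrable_const _)).smul (1 - p)
  have hi : Integrable h μ := iy.sub ix
  have h0 : ∫ ξ, h ξ ∂μ = 0 := by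
    rw [hh, integral_sub iy ix, integral_smul, integral_sub (hGint y) (integrable_const _),
      integral_sub (hGint x) (integrable_const _), hUnbiased, hUnbiased]
    simp [a, b]
  obtain ⟨iD, hD⟩ := mvr_aux_var μ (fun ξ => G y ξ - G x ξ) ((hGint y).sub (hGint x)) (b - a)
    (by rw [integral_sub (hGint y) (hGint x), hUnbiased, hUnbiased]) (hMSint y x)
  have hle : ∀ ξ, ‖h ξ‖ ^ 2 ≤ 2 * p ^ 2 * ‖G y ξ - b‖ ^ 2
      + 2 * (1 - p) ^ 2 * ‖G y ξ - G x ξ - (b - a)‖ ^ 2 := by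
    intro ξ
    have e : h ξ = p • (G y ξ - b) + (1 - p) • (G y ξ - G x ξ - (b - a)) := by
      simp only [hh]; module
    rw [e]
    have t := parallelogram_law_with_norm ℝ (p • (G y ξ - b))
      ((1 - p) • (G y ξ - G x ξ - (b - a)))
    have n1 : ‖p • (G y ξ - b)‖ ^ 2 = p ^ 2 * ‖G y ξ - b‖ ^ 2 := by
      rw [norm_smul, mul_pow, Real.norm_eq_abs, sq_abs]
    have n2 : ‖(1 - p) • (G y ξ - G x ξ - (b - a))‖ ^ 2
        = (1 - p) ^ 2 * ‖G y ξ - G x ξ - (b - a)‖ ^ 2 := by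
      rw [norm_smul, mul_pow, Real.norm_eq_abs, sq_abs]
    nlinarith [sq_nonneg ‖p • (G y ξ - b) - (1 - p) • (G y ξ - G x ξ - (b - a))‖]
  have j1 : Integrable (fun ξ => 2 * p ^ 2 * ‖G y ξ - b‖ ^ 2) μ := (hVarInt y).const_mul _
  have j2 : Integrable (fun ξ => 2 * (1 - p) ^ 2 * ‖G y ξ - G x ξ - (b - a)‖ ^ 2) μ :=
    iD.const_mul _
  have h2 : Integrable (fun ξ => ‖h ξ‖ ^ 2) μ := by
    refine (j1.add j2).mono' (hm.norm.pow_const 2).aestronglyMeasurable ?_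
    refine Filter.Eventually.of_forall fun ξ => ?_
    rw [Real.norm_eq_abs, abs_of_nonneg (sq_nonneg _)]
    exact hle ξ
  have hE : ∫ ξ, ‖h ξ‖ ^ 2 ∂μ
      ≤ 2 * p ^ 2 * σ ^ 2 + 2 * (1 - p) ^ 2 * (Lbar ^ 2 * ‖y - x‖ ^ 2) := by
    refine (integral_mono h2 (j1.add j2) hle).trans ?_
    simp only [Pi.add_apply]
    rw [integral_add j1 j2, integral_const_mul, integral_const_mul]
    have := hVar y
    have := hD.trans (hMS y x)
    gcongr
  have hB0 : (B : ℝ) ≠ 0 := by positivity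
  have key : ∀ ω : Fin B → Ω,
      ((B : ℝ)⁻¹ • ∑ j, G y (ω j) + (1 - p) • (g - (B : ℝ)⁻¹ • ∑ j, G x (ω j))) - b
        = (1 - p) • (g - a) + (B : ℝ)⁻¹ • ∑ j, h (ω j) := by
    intro ω
    simp only [hh, Finset.sum_sub_distrib, ← Finset.smul_sum, Finset.sum_const, Finset.card_univ,
      Fintype.card_fin, ← Nat.cast_smul_eq_nsmul ℝ]
    match_scalars <;> field_simp <;> ring
  simp only [key]
  rw [mvr_aux_pi μ h hm hi h0 h2, norm_smul, mul_pow, Real.norm_eq_abs, sq_abs, add_assoc]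
  have hBp : (0 : ℝ) < B := by positivity
  have : ((B : ℝ)⁻¹) ^ 2 * (B * ∫ ξ, ‖h ξ‖ ^ 2 ∂μ) = (∫ ξ, ‖h ξ‖ ^ 2 ∂μ) / B := by
    field_simp
  rw [this]
  gcongr
  calc _ ≤ (2 * p ^ 2 * σ ^ 2 + 2 * (1 - p) ^ 2 * (Lbar ^ 2 * ‖y - x‖ ^ 2)) / B := by gcongr
    _ = _ := by ring
end

section
/- Consider the Rennala MVR iteration: let B₀ ≥ 1, B ≥ 1, p ∈ (0,1], γ > 0, x⁰ ∈ ℝ^d, and let ζ₁, …, ζ_{B₀} together with (ξ^{k,j})_{k≥0, 1≤j≤B} all be i.i.d. samples from μ, mutually independent. Set g⁰ = (1/B₀)∑_{j=1}^{B₀} ∇f(x⁰;ζ_j) and recursively x^{k+1} = x^k − γ g^k and g^{k+1} = (1/B)∑_{j=1}^B ∇f(x^{k+1};ξ^{k,j}) + (1−p)(g^k − (1/B)∑_{j=1}^B ∇f(x^k;ξ^{k,j})). If the stepsize satisfies γ ≤ 1/(2L̄(1 + (1−p)/√(pB))), then for every K ≥ 1, (1/K)∑_{k=0}^{K−1} E[‖∇f(x^k)‖²]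 ≤ 2Δ/(γK) + 2pσ²/B + (1/(pK))·(2σ²/B₀), where Δ = f(x⁰) − f*. -/
open MeasureTheory

/-- One step of the Rennala MVR recursion: given the initialization samples `ζ` and the
per-iteration samples `ξ`, `rennalaMVR G γ p B₀ B x0 ζ ξ k = (xᵏ, gᵏ)` where
`g⁰ = (1/B₀)∑ⱼ G x⁰ ζⱼ`, `x^{k+1} = x^k − γ g^k` and
`g^{k+1} = (1/B)∑ⱼ G x^{k+1} ξ^{k,j} + (1−p)(g^k − (1/B)∑ⱼ G x^k ξ^{k,j})`. -/
noncomputable def rennalaMVR {d : ℕ} {Ω : Type*}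
    (G : EuclideanSpace ℝ (Fin d) → Ω → EuclideanSpace ℝ (Fin d))
    (γ p : ℝ) (B₀ B : ℕ) (x0 : EuclideanSpace ℝ (Fin d))
    (ζ : Fin B₀ → Ω) (ξ : ℕ → Fin B → Ω) :
    ℕ → EuclideanSpace ℝ (Fin d) × EuclideanSpace ℝ (Fin d)
  | 0 => (x0, (B₀ : ℝ)⁻¹ • ∑ j, G x0 (ζ j))
  | k + 1 =>
    let prev := rennalaMVR G γ p B₀ B x0 ζ ξ k
    let x1 := prev.1 - γ • prev.2
    (x1,
      (B : ℝ)⁻¹ • ∑ j, G x1 (ξ k j)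
        + (1 - p) • (prev.2 - (B : ℝ)⁻¹ • ∑ j, G prev.1 (ξ k j)))


namespace RMVR

theorem descent {E : Type*} [NormedAddCommGroup E] [InnerProductSpace ℝ E] [CompleteSpace E]
    (f : E → ℝ) (hf : Differentiable ℝ f) (L : ℝ)
    (hL : ∀ x y, ‖gradient f x - gradient f y‖ ≤ L * ‖x - y‖) (x v : E) :
    f (x + v) ≤ f x + inner ℝ (gradient f x) v + L / 2 * ‖v‖ ^ 2 := by
  have hd : ∀ t : ℝ, HasDerivAt
      (fun t : ℝ => f (x + t • v) - t * inner ℝ (gradient f x) v - L / 2 * t ^ 2 * ‖v‖ ^ 2)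
      (inner ℝ (gradient f (x + t • v)) v - inner ℝ (gradient f x) v - L * t * ‖v‖ ^ 2) t := by
    intro t
    have h1 : HasDerivAt (fun t : ℝ => x + t • v) v t := by
      simpa using ((hasDerivAt_id t).smul_const v).const_add x
    have h2 := (hf (x + t • v)).hasGradientAt.hasFDerivAt.comp_hasDerivAt t h1
    have h3 : HasDerivAt (fun t : ℝ => t * inner ℝ (gradient f x) v)
        (inner ℝ (gradient f x) v) t := by
      simpa using (hasDerivAt_id t).mul_const (inner ℝ (gradient f x) v)
    have h4 : HasDerivAt (fun t : ℝ => L / 2 * t ^ 2 * ‖v‖ ^ 2) (L * t * ‖v‖ ^ 2) t := by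
      have := ((hasDerivAt_pow 2 t).const_mul (L / 2)).mul_const (‖v‖ ^ 2)
      have e : L / 2 * (((2 : ℕ) : ℝ) * t ^ (2 - 1)) * ‖v‖ ^ 2 = L * t * ‖v‖ ^ 2 := by
        push_cast; ring
      rw [← e]; exact this
    have h5 : (InnerProductSpace.toDual ℝ E (gradient f (x + t • v))) v
        = inner ℝ (gradient f (x + t • v)) v := InnerProductSpace.toDual_apply_apply
    rw [h5] at h2
    exact (h2.sub h3).sub h4
  have hanti : AntitoneOn (fun t : ℝ => f (x + t • v) - t * inner ℝ (gradient f x) v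
      - L / 2 * t ^ 2 * ‖v‖ ^ 2) (Set.Icc 0 1) := by
    apply antitoneOn_of_deriv_nonpos (convex_Icc 0 1)
    · exact fun t _ => (hd t).continuousAt.continuousWithinAt
    · exact fun t _ => (hd t).differentiableAt.differentiableWithinAt
    · intro t ht
      rw [interior_Icc] at ht
      rw [(hd t).deriv, ← inner_sub_left]
      have h1 := real_inner_le_norm (gradient f (x + t • v) - gradient f x) v
      have h2 := hL (x + t • v) x
      rw [add_sub_cancel_left, norm_smul, Real.norm_eq_abs, abs_of_pos ht.1] at h2
      nlinarith [norm_nonneg v]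
  have := hanti (by simp : (0 : ℝ) ∈ Set.Icc (0 : ℝ) 1) (by simp : (1 : ℝ) ∈ Set.Icc (0 : ℝ) 1)
    zero_le_one
  simp only [one_smul, zero_smul, add_zero, one_mul, zero_mul] at this
  linarith

section prob
variable {Ω : Type*} [MeasurableSpace Ω] (μ : Measure Ω) [IsProbabilityMeasure μ]
  {E : Type*} [NormedAddCommGroup E] [InnerProductSpace ℝ E] [CompleteSpace E]
  [FiniteDimensional ℝ E] [MeasurableSpace E] [BorelSpace E]

theorem sq_one (Z : Ω → E) (hi : Integrable Z μ)
    (h2 : Integrable (fun ω => ‖Z ω‖ ^ 2) μ) (h0 : ∫ ω, Z ω ∂μ = 0) (c : E) :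
    Integrable (fun ω => ‖c + Z ω‖ ^ 2) μ ∧
      ∫ ω, ‖c + Z ω‖ ^ 2 ∂μ = ‖c‖ ^ 2 + ∫ ω, ‖Z ω‖ ^ 2 ∂μ := by
  have he : (fun ω => ‖c + Z ω‖ ^ 2) = fun ω => (‖c‖ ^ 2 + 2 * inner ℝ c (Z ω)) + ‖Z ω‖ ^ 2 := by
    funext ω; exact norm_add_sq_real c (Z ω)
  have hin : Integrable (fun ω => 2 * inner ℝ c (Z ω)) μ := (hi.const_inner c).const_mul 2
  have hin2 : Integrable (fun ω => ‖c‖ ^ 2 + 2 * inner ℝ c (Z ω)) μ :=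
    (integrable_const _).add hin
  rw [he]
  refine ⟨hin2.add h2, ?_⟩
  rw [integral_add hin2 h2, integral_add (integrable_const _) hin, integral_const_mul,
    integral_inner hi, h0]
  simp

theorem sq_sum (Z : Ω → E) (hm : Measurable Z) (hi : Integrable Z μ)
    (h2 : Integrable (fun ω => ‖Z ω‖ ^ 2) μ) (h0 : ∫ ω, Z ω ∂μ = 0) (n : ℕ) : ∀ c : E,
    Integrable (fun w : Fin n → Ω => ‖c + ∑ j, Z (w j)‖ ^ 2) (Measure.pi fun _ => μ) ∧
      ∫ w : Fin n → Ω, ‖c + ∑ j, Z (w j)‖ ^ 2 ∂(Measure.pi fun _ => μ)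
        = ‖c‖ ^ 2 + n * ∫ ω, ‖Z ω‖ ^ 2 ∂μ := by
  induction n with
  | zero => intro c; simp
  | succ n ih =>
    intro c
    have mp := measurePreserving_piFinSuccAbove (fun _ : Fin (n + 1) => μ) 0
    set H : Ω × (Fin n → Ω) → ℝ := fun q => ‖(c + Z q.1) + ∑ j, Z (q.2 j)‖ ^ 2 with hH
    have hHm : Measurable H := by
      rw [hH]
      have : Measurable fun q : Ω × (Fin n → Ω) => ∑ j, Z (q.2 j) :=
        Finset.measurable_sum _ fun j _ => hm.comp ((measurable_pi_apply j).comp measurable_snd)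
      exact (((hm.comp measurable_fst).const_add c).add this).norm.pow_const 2
    have hcomp : (fun w : Fin (n + 1) → Ω => ‖c + ∑ j, Z (w j)‖ ^ 2)
        = H ∘ (MeasurableEquiv.piFinSuccAbove (fun _ => Ω) 0) := by
      funext w
      simp only [hH, Function.comp, Fin.sum_univ_succ, add_assoc]
      rfl
    have hs := sq_one μ Z hi h2 h0 c
    have hHi : Integrable H (μ.prod (Measure.pi fun _ => μ)) := by
      rw [integrable_prod_iff hHm.aestronglyMeasurable]
      refine ⟨Filter.Eventually.of_forall fun a => (ih (c + Z a)).1, ?_⟩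
      have : (fun a => ∫ w : Fin n → Ω, ‖H (a, w)‖ ∂(Measure.pi fun _ => μ))
          = fun a => ‖c + Z a‖ ^ 2 + n * ∫ ω, ‖Z ω‖ ^ 2 ∂μ := by
        funext a
        rw [← (ih (c + Z a)).2]
        simp [hH]
      rw [this]
      exact hs.1.add (integrable_const _)
    rw [hcomp]
    refine ⟨(mp.integrable_comp_emb (MeasurableEquiv.measurableEmbedding _)).2 hHi, ?_⟩
    have e1 := mp.integral_comp (MeasurableEquiv.measurableEmbedding _) H
    refine e1.trans ?_
    rw [integral_prod _ hHi]
    have : (fun a => ∫ w : Fin n → Ω, H (a, w) ∂(Measure.pi fun _ => μ))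
          = fun a => ‖c + Z a‖ ^ 2 + n * ∫ ω, ‖Z ω‖ ^ 2 ∂μ := by
      funext a
      exact (ih (c + Z a)).2
    rw [this, integral_add hs.1 (integrable_const _), hs.2]
    simp; ring

theorem sq_avg (Z : Ω → E) (hm : Measurable Z) (hi : Integrable Z μ)
    (h2 : Integrable (fun ω => ‖Z ω‖ ^ 2) μ) (h0 : ∫ ω, Z ω ∂μ = 0) (n : ℕ) (hn : 1 ≤ n) (c : E) :
    Integrable (fun w : Fin n → Ω => ‖c + (n : ℝ)⁻¹ • ∑ j, Z (w j)‖ ^ 2) (Measure.pi fun _ => μ) ∧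
      ∫ w : Fin n → Ω, ‖c + (n : ℝ)⁻¹ • ∑ j, Z (w j)‖ ^ 2 ∂(Measure.pi fun _ => μ)
        = ‖c‖ ^ 2 + (∫ ω, ‖Z ω‖ ^ 2 ∂μ) / n := by
  have hn' : (n : ℝ) ≠ 0 := by positivity
  have e : ∀ ω, ‖(n : ℝ)⁻¹ • Z ω‖ ^ 2 = (n : ℝ)⁻¹ ^ 2 * ‖Z ω‖ ^ 2 := by
    intro ω; rw [norm_smul, mul_pow, Real.norm_eq_abs, sq_abs]
  have := sq_sum μ (fun ω => (n : ℝ)⁻¹ • Z ω) (hm.const_smul _) (hi.smul _)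
    (by simp only [e]; exact h2.const_mul _) (by rw [integral_smul, h0, smul_zero]) n c
  simp only [← Finset.smul_sum, e] at this
  refine ⟨this.1, ?_⟩
  rw [this.2, integral_const_mul]
  field_simp

/-- variance is at most the second moment, in expanded form -/
theorem var_le (W : Ω → E) (hi : Integrable W μ) (hc2 : Integrable (fun ω => ‖W ω‖ ^ 2) μ) :
    Integrable (fun ω => ‖W ω - ∫ a, W a ∂μ‖ ^ 2) μ ∧
    ‖∫ a, W a ∂μ‖ ^ 2 + ∫ ω, ‖W ω - ∫ a, W a ∂μ‖ ^ 2 ∂μ = ∫ ω, ‖W ω‖ ^ 2 ∂μ := by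
  set m := ∫ a, W a ∂μ with hmdef
  have hint : Integrable (fun ω => ‖W ω - m‖ ^ 2) μ := by
    have he : (fun ω => ‖W ω - m‖ ^ 2)
        = fun ω => ‖W ω‖ ^ 2 - 2 * inner ℝ m (W ω) + ‖m‖ ^ 2 := by
      funext ω; rw [norm_sub_sq_real, real_inner_comm]
    rw [he]
    exact (hc2.sub ((hi.const_inner m).const_mul 2)).add (integrable_const _)
  refine ⟨hint, ?_⟩
  have := (sq_one μ (fun ω => W ω - m) (hi.sub (integrable_const _)) hint
    (by rw [integral_sub hi (integrable_const _)]; simp [hmdef]) m).2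
  simpa using this.symm

end prob

section law
variable {d : ℕ} {Ω : Type*} [MeasurableSpace Ω] (μ : Measure Ω) [IsProbabilityMeasure μ]
  (G : EuclideanSpace ℝ (Fin d) → Ω → EuclideanSpace ℝ (Fin d))
  (γ p : ℝ) (B₀ B : ℕ) (x0 : EuclideanSpace ℝ (Fin d))

/-- one step of the recursion on states -/
noncomputable def step
    (q : (EuclideanSpace ℝ (Fin d) × EuclideanSpace ℝ (Fin d)) × (Fin B → Ω)) :
    EuclideanSpace ℝ (Fin d) × EuclideanSpace ℝ (Fin d) :=
  (q.1.1 - γ • q.1.2,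
      (B : ℝ)⁻¹ • ∑ j, G (q.1.1 - γ • q.1.2) (q.2 j)
        + (1 - p) • (q.1.2 - (B : ℝ)⁻¹ • ∑ j, G q.1.1 (q.2 j)))

/-- initial state -/
noncomputable def init (ζ : Fin B₀ → Ω) :
    EuclideanSpace ℝ (Fin d) × EuclideanSpace ℝ (Fin d) :=
  (x0, (B₀ : ℝ)⁻¹ • ∑ j, G x0 (ζ j))

/-- law of the k-th state -/
noncomputable def law : ℕ → Measure (EuclideanSpace ℝ (Fin d) × EuclideanSpace ℝ (Fin d))
  | 0 => (Measure.pi fun _ : Fin B₀ => μ).map (init G B₀ x0)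
  | k + 1 => ((law k).prod (Measure.pi fun _ : Fin B => μ)).map (step G γ p B)

theorem rec_succ (ζ : Fin B₀ → Ω) (ξ : ℕ → Fin B → Ω) (k : ℕ) :
    rennalaMVR G γ p B₀ B x0 ζ ξ (k + 1)
      = step G γ p B (rennalaMVR G γ p B₀ B x0 ζ ξ k, ξ k) := rfl

theorem rec_congr (ζ : Fin B₀ → Ω) (ξ ξ' : ℕ → Fin B → Ω) (k : ℕ)
    (h : ∀ i < k, ξ i = ξ' i) :
    rennalaMVR G γ p B₀ B x0 ζ ξ k = rennalaMVR G γ p B₀ B x0 ζ ξ' k := by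
  induction k with
  | zero => rfl
  | succ k ih =>
    rw [rec_succ, rec_succ, ih fun i hi => h i (by omega), h k (by omega)]

variable (hG : Measurable fun q : (EuclideanSpace ℝ (Fin d)) × Ω => G q.1 q.2)
include hG

theorem step_meas : Measurable (step G γ p B) := by
  unfold step
  have h1 : Measurable fun q : (EuclideanSpace ℝ (Fin d) × EuclideanSpace ℝ (Fin d)) ×
      (Fin B → Ω) => q.1.1 - γ • q.1.2 := by fun_prop
  have h2 : ∀ j : Fin B, Measurable fun q : (EuclideanSpace ℝ (Fin d) × EuclideanSpace ℝ (Fin d)) ×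
      (Fin B → Ω) => q.2 j := fun j => by fun_prop
  have h3 : ∀ j : Fin B, Measurable fun q : (EuclideanSpace ℝ (Fin d) × EuclideanSpace ℝ (Fin d)) ×
      (Fin B → Ω) => G (q.1.1 - γ • q.1.2) (q.2 j) := fun j => hG.comp (h1.prodMk (h2 j))
  have h4 : ∀ j : Fin B, Measurable fun q : (EuclideanSpace ℝ (Fin d) × EuclideanSpace ℝ (Fin d)) ×
      (Fin B → Ω) => G q.1.1 (q.2 j) :=
    fun j => hG.comp ((measurable_fst.comp measurable_fst).prodMk (h2 j))
  fun_prop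

theorem init_meas : Measurable (init G B₀ x0) := by
  unfold init
  have h3 : ∀ j : Fin B₀, Measurable fun q : (Fin B₀ → Ω) => G x0 (q j) :=
    fun j => hG.comp (measurable_const.prodMk (measurable_pi_apply j))
  fun_prop

theorem rec_meas (k : ℕ) : Measurable fun q : (Fin B₀ → Ω) × (ℕ → Fin B → Ω) =>
    rennalaMVR G γ p B₀ B x0 q.1 q.2 k := by
  induction k with
  | zero => exact (init_meas G B₀ x0 hG).comp measurable_fst
  | succ k ih =>
    simp only [rec_succ]
    exact (step_meas G γ p B hG).comp
      (ih.prodMk ((measurable_pi_apply k).comp measurable_snd))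

theorem law_prob (k : ℕ) : IsProbabilityMeasure (law μ G γ p B₀ B x0 k) := by
  induction k with
  | zero => exact Measure.isProbabilityMeasure_map (init_meas G B₀ x0 hG).aemeasurable
  | succ k ih => exact Measure.isProbabilityMeasure_map (step_meas G γ p B hG).aemeasurable

omit hG in
theorem indep_aux {A X S : Type*} [MeasurableSpace A] [MeasurableSpace X] [MeasurableSpace S]
    (P : Measure A) [IsProbabilityMeasure P] (π : Measure X) [IsProbabilityMeasure π] {K : ℕ}
    (i : Fin K) (F : A × ({j : Fin K // j ∈ Finset.univ.filter (· < i)} → X) → S)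
    (hF : Measurable F) :
    (P.prod (Measure.pi fun _ : Fin K => π)).map
        (fun ω => (F (ω.1, fun j => ω.2 j), ω.2 i))
      = ((P.prod (Measure.pi fun _ : Fin K => π)).map
        (fun ω => F (ω.1, fun j => ω.2 j))).prod π := by
  set Q := Measure.pi fun _ : Fin K => π with hQ
  let r : (Fin K → X) → ({j : Fin K // j ∈ Finset.univ.filter (· < i)} → X) := fun w j => w j
  have hr : Measurable r := by fun_prop
  have hind : ProbabilityTheory.IndepFun r (fun w : Fin K → X => w i) Q := by
    have h1 : ProbabilityTheory.iIndepFun (fun (j : Fin K) (w : Fin K → X) => w j) Q :=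
      ProbabilityTheory.iIndepFun_pi (X := fun _ x => x) (fun _ => aemeasurable_id)
    have h2 := h1.indepFun_finset (Finset.univ.filter (· < i)) {i} (by simp)
      (fun j => measurable_pi_apply j)
    exact h2.comp (φ := id)
      (ψ := fun z : ({j : Fin K // j ∈ ({i} : Finset (Fin K))} → X) => z ⟨i, by simp⟩)
      measurable_id (by fun_prop)
  have hmap : Q.map (fun w => (r w, w i)) = (Q.map r).prod π := by
    rw [hind.map_prod_eq_prod_map_map hr.aemeasurable (measurable_pi_apply i).aemeasurable,
      (measurePreserving_eval (fun _ : Fin K => π) i).map_eq]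
  have : IsProbabilityMeasure (Q.map r) := Measure.isProbabilityMeasure_map hr.aemeasurable
  have hjoint : (P.prod Q).map (fun ω => ((ω.1, r ω.2), ω.2 i)) = (P.prod (Q.map r)).prod π := by
    have e1 : (P.prod Q).map (Prod.map id (fun w => (r w, w i)))
        = P.prod ((Q.map r).prod π) := by
      rw [← Measure.map_prod_map _ _ measurable_id (by fun_prop), hmap, Measure.map_id]
    rw [← Measure.prodAssoc_prod] at e1
    have e2 := congrArg (Measure.map MeasurableEquiv.prodAssoc.symm) e1
    rw [MeasurableEquiv.map_symm_map, Measure.map_map (by fun_prop) (by fun_prop)] at e2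
    exact e2
  have hfst : (P.prod Q).map (fun ω => (ω.1, r ω.2)) = P.prod (Q.map r) := by
    have := Measure.map_prod_map P Q measurable_id hr
    rw [Measure.map_id] at this
    exact this.symm
  have hL : (P.prod Q).map (fun ω => (F (ω.1, r ω.2), ω.2 i))
      = ((P.prod Q).map (fun ω => ((ω.1, r ω.2), ω.2 i))).map (Prod.map F id) := by
    rw [Measure.map_map (by fun_prop) (by fun_prop)]; rfl
  have hR : (P.prod Q).map (fun ω => F (ω.1, r ω.2))
      = ((P.prod Q).map (fun ω => (ω.1, r ω.2))).map F := by
    rw [Measure.map_map hF (by fun_prop)]; rfl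
  change (P.prod Q).map (fun ω => (F (ω.1, r ω.2), ω.2 i))
      = ((P.prod Q).map (fun ω => F (ω.1, r ω.2))).prod π
  rw [hL, hR, hjoint, hfst, ← Measure.map_prod_map _ _ hF measurable_id, Measure.map_id]

theorem law_eq (K : ℕ) (hK : 1 ≤ K) (k : ℕ) (hk : k ≤ K) :
    ((Measure.pi fun _ : Fin B₀ => μ).prod
      (Measure.pi fun _ : Fin K => Measure.pi fun _ : Fin B => μ)).map
      (fun ω => rennalaMVR G γ p B₀ B x0 ω.1
                (fun k' => ω.2 ⟨k' % K, Nat.mod_lt _ hK⟩) k) = law μ G γ p B₀ B x0 k := by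
  induction k with
  | zero =>
    have : (fun ω : (Fin B₀ → Ω) × (Fin K → Fin B → Ω) => rennalaMVR G γ p B₀ B x0 ω.1
                (fun k' => ω.2 ⟨k' % K, Nat.mod_lt _ hK⟩) 0)
        = init G B₀ x0 ∘ Prod.fst := rfl
    rw [this, ← Measure.map_map (init_meas G B₀ x0 hG) measurable_fst, Measure.map_fst_prod]
    simp [law]
  | succ k ih =>
    have hkK : k < K := hk
    have : Nonempty Ω := nonempty_of_isProbabilityMeasure μ
    let i : Fin K := ⟨k, hkK⟩
    let ext : ({j : Fin K // j ∈ Finset.univ.filter (· < i)} → Fin B → Ω) → ℕ → Fin B → Ω :=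
      fun r n => if h : n < k then r ⟨⟨n, h.trans hkK⟩, by simp [i, h]⟩
        else fun _ => Classical.arbitrary Ω
    have hext : Measurable ext := by
      refine measurable_pi_iff.2 fun n => ?_
      by_cases h : n < k
      · simp only [ext, h, dif_pos]; fun_prop
      · simp only [ext, h, dif_neg, not_false_eq_true]; fun_prop
    let F : (Fin B₀ → Ω) × ({j : Fin K // j ∈ Finset.univ.filter (· < i)} → Fin B → Ω) →
      EuclideanSpace ℝ (Fin d) × EuclideanSpace ℝ (Fin d) :=
      fun q => rennalaMVR G γ p B₀ B x0 q.1 (ext q.2) k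
    have hF : Measurable F :=
      (rec_meas G γ p B₀ B x0 hG k).comp
        (measurable_fst.prodMk (hext.comp measurable_snd))
    have hst : ∀ ω : (Fin B₀ → Ω) × (Fin K → Fin B → Ω), rennalaMVR G γ p B₀ B x0 ω.1
                (fun k' => ω.2 ⟨k' % K, Nat.mod_lt _ hK⟩) k = F (ω.1, fun j => ω.2 j) := by
      intro ω
      apply rec_congr
      intro n hn
      simp only [ext, hn, dif_pos, Nat.mod_eq_of_lt (hn.trans hkK)]
    have key := indep_aux (Measure.pi fun _ : Fin B₀ => μ) (Measure.pi fun _ : Fin B => μ) i F hF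
    specialize ih (by omega)
    simp only [hst] at ih
    rw [ih] at key
    rw [law, ← key, Measure.map_map (step_meas G γ p B hG) (by fun_prop)]
    congr 1
    funext ω
    rw [rec_succ, hst]
    simp only [Nat.mod_eq_of_lt hkK, Function.comp, i]

end law

section main
variable {d : ℕ} {Ω : Type*} [MeasurableSpace Ω] (μ : Measure Ω) [IsProbabilityMeasure μ]

theorem var_step
    (f : EuclideanSpace ℝ (Fin d) → ℝ)
    (G : EuclideanSpace ℝ (Fin d) → Ω → EuclideanSpace ℝ (Fin d))
    (hGmeas : Measurable fun q : (EuclideanSpace ℝ (Fin d)) × Ω => G q.1 q.2)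
    (hGint : ∀ x, Integrable (G x) μ)
    (hUnbiased : ∀ x, (∫ ξ, G x ξ ∂μ) = gradient f x)
    (σ : ℝ)
    (hVarInt : ∀ x, Integrable (fun ξ => ‖G x ξ - gradient f x‖ ^ 2) μ)
    (hVar : ∀ x, (∫ ξ, ‖G x ξ - gradient f x‖ ^ 2 ∂μ) ≤ σ ^ 2)
    (Lbar : ℝ)
    (hMSint : ∀ x y, Integrable (fun ξ => ‖G x ξ - G y ξ‖ ^ 2) μ)
    (hMS : ∀ x y, (∫ ξ, ‖G x ξ - G y ξ‖ ^ 2 ∂μ) ≤ Lbar ^ 2 * ‖x - y‖ ^ 2)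
    (p : ℝ) (x y : EuclideanSpace ℝ (Fin d)) :
    Measurable (fun ξ => (G y ξ - gradient f y) - (1 - p) • (G x ξ - gradient f x)) ∧
    Integrable (fun ξ => (G y ξ - gradient f y) - (1 - p) • (G x ξ - gradient f x)) μ ∧
    Integrable (fun ξ => ‖(G y ξ - gradient f y) - (1 - p) • (G x ξ - gradient f x)‖ ^ 2) μ ∧
    (∫ ξ, (G y ξ - gradient f y) - (1 - p) • (G x ξ - gradient f x) ∂μ) = 0 ∧
    (∫ ξ, ‖(G y ξ - gradient f y) - (1 - p) • (G x ξ - gradient f x)‖ ^ 2 ∂μ)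
      ≤ 2 * p ^ 2 * σ ^ 2 + 2 * (1 - p) ^ 2 * Lbar ^ 2 * ‖y - x‖ ^ 2 := by
  have hm : ∀ z, Measurable (G z) := fun z => hGmeas.comp (measurable_const.prodMk measurable_id)
  have hmeas : Measurable
      (fun ξ => (G y ξ - gradient f y) - (1 - p) • (G x ξ - gradient f x)) :=
    ((hm y).sub_const _).sub (((hm x).sub_const (gradient f x)).fun_const_smul (1 - p))
  have hc : ∀ z, Integrable (fun ξ => G z ξ - gradient f z) μ :=
    fun z => (hGint z).sub (integrable_const _)
  have hc0 : ∀ z, ∫ ξ, G z ξ - gradient f z ∂μ = 0 := fun z => by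
    rw [integral_sub (hGint z) (integrable_const _), hUnbiased]; simp
  have hW := var_le μ (fun ξ => G y ξ - G x ξ) ((hGint y).sub (hGint x)) (hMSint y x)
  rw [integral_sub (hGint y) (hGint x), hUnbiased, hUnbiased] at hW
  have hpt : ∀ ξ, ‖(G y ξ - gradient f y) - (1 - p) • (G x ξ - gradient f x)‖ ^ 2
      ≤ 2 * p ^ 2 * ‖G y ξ - gradient f y‖ ^ 2
        + 2 * (1 - p) ^ 2 * ‖G y ξ - G x ξ - (gradient f y - gradient f x)‖ ^ 2 := by
    intro ξ
    have e : (G y ξ - gradient f y) - (1 - p) • (G x ξ - gradient f x)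
        = p • (G y ξ - gradient f y)
          + (1 - p) • (G y ξ - G x ξ - (gradient f y - gradient f x)) := by
      module
    rw [e]
    set a := p • (G y ξ - gradient f y) with ha
    set b := (1 - p) • (G y ξ - G x ξ - (gradient f y - gradient f x)) with hb
    have h1 : ‖a‖ ^ 2 = p ^ 2 * ‖G y ξ - gradient f y‖ ^ 2 := by
      rw [ha, norm_smul, mul_pow, Real.norm_eq_abs, sq_abs]
    have h2 : ‖b‖ ^ 2 = (1 - p) ^ 2 * ‖G y ξ - G x ξ - (gradient f y - gradient f x)‖ ^ 2 := by
      rw [hb, norm_smul, mul_pow, Real.norm_eq_abs, sq_abs]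
    have h3 := norm_add_le a b
    nlinarith [sq_nonneg (‖a‖ - ‖b‖), norm_nonneg (a + b), norm_nonneg a, norm_nonneg b]
  have hb1 : Integrable (fun ξ => 2 * p ^ 2 * ‖G y ξ - gradient f y‖ ^ 2) μ :=
    (hVarInt y).const_mul _
  have hb2 : Integrable (fun ξ => 2 * (1 - p) ^ 2 *
      ‖G y ξ - G x ξ - (gradient f y - gradient f x)‖ ^ 2) μ := hW.1.const_mul _
  have hbi := hb1.add hb2
  have hi : Integrable
      (fun ξ => ‖(G y ξ - gradient f y) - (1 - p) • (G x ξ - gradient f x)‖ ^ 2) μ := by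
    refine hbi.mono' (hmeas.norm.pow_const 2).aestronglyMeasurable ?_
    refine Filter.Eventually.of_forall fun ξ => ?_
    rw [Real.norm_of_nonneg (by positivity)]
    exact hpt ξ
  refine ⟨hmeas, (hc y).sub ((hc x).fun_smul (1 - p)), hi, ?_, ?_⟩
  · rw [integral_sub (hc y) ((hc x).fun_smul (1 - p)), integral_smul, hc0, hc0]; simp
  · refine (integral_mono hi hbi hpt).trans ?_
    simp only [Pi.add_apply]
    rw [integral_add hb1 hb2, integral_const_mul, integral_const_mul]
    have h1 := hVar y
    have h2 := hMS y x
    have h3 : ∫ ξ, ‖G y ξ - G x ξ - (gradient f y - gradient f x)‖ ^ 2 ∂μ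
        ≤ Lbar ^ 2 * ‖y - x‖ ^ 2 := by
      nlinarith [hW.2, sq_nonneg ‖gradient f y - gradient f x‖]
    have h4 := mul_le_mul_of_nonneg_left h1 (by positivity : 0 ≤ 2 * p ^ 2)
    have h5 := mul_le_mul_of_nonneg_left h3 (by positivity : 0 ≤ 2 * (1 - p) ^ 2)
    linarith

theorem scalar_cond (L a γ : ℝ) (hL : 0 < L) (ha : 0 ≤ a) (hγ : 0 < γ)
    (h : γ ≤ 1 / (2 * L * (1 + a))) :
    γ * L ^ 2 * a ^ 2 ≤ 1 / (2 * γ) - L / 2 ∧ 0 < 1 / (2 * γ) - L / 2 := by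
  rw [le_div_iff₀ (by positivity)] at h
  have hu : 0 < γ * L := by positivity
  have hv : 0 ≤ γ * L * a := by positivity
  have h' : 2 * (γ * L) + 2 * (γ * L * a) ≤ 1 := by linarith
  have e : 1 / (2 * γ) - L / 2 = (1 - γ * L) / (2 * γ) := by field_simp
  rw [e]
  constructor
  · rw [le_div_iff₀ (by positivity)]
    have : γ * L ^ 2 * a ^ 2 * (2 * γ) = 2 * (γ * L * a) ^ 2 := by ring
    rw [this]
    nlinarith
  · apply div_pos _ (by positivity)
    linarith

theorem recursion (N V D φ : ℕ → ℝ) (γ p c S T : ℝ) (hγ : 0 < γ) (hp : 0 < p) (hp1 : p ≤ 1)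
    (hV : ∀ k, 0 ≤ V k) (hD : ∀ k, 0 ≤ D k)
    (h1 : ∀ k, φ (k + 1) + γ / 2 * N k + c * D k ≤ φ k + γ / 2 * V k)
    (h2 : ∀ k, V (k + 1) ≤ (1 - p) ^ 2 * V k + p * S + p * T * D k)
    (hT : γ / 2 * T ≤ c) (K : ℕ) :
    γ / 2 * ∑ k ∈ Finset.range K, N k + φ K + γ / (2 * p) * V K
      ≤ φ 0 + γ / (2 * p) * V 0 + K * (γ / 2 * S) := by
  induction K with
  | zero => simp
  | succ K ih =>
    rw [Finset.sum_range_succ]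
    push_cast
    have a1 := h1 K
    have a2 := mul_le_mul_of_nonneg_left (h2 K) (by positivity : 0 ≤ γ / (2 * p))
    have e : γ / (2 * p) * ((1 - p) ^ 2 * V K + p * S + p * T * D K)
        = γ / (2 * p) * V K - γ / 2 * V K - γ / 2 * (1 - p) * V K
          + γ / 2 * S + γ / 2 * T * D K := by
      field_simp
    rw [e] at a2
    have a3 := mul_le_mul_of_nonneg_right hT (hD K)
    have a4 : 0 ≤ γ / 2 * (1 - p) * V K :=
      mul_nonneg (mul_nonneg (by positivity) (by linarith)) (hV K)
    nlinarith

end main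

end RMVR

/-- Iteration-complexity bound for Rennala MVR: under unbiasedness,
bounded variance `σ²` and mean-squared smoothness `L̄`, if
`γ ≤ 1/(2L̄(1 + (1−p)/√(pB)))` then for every `K ≥ 1`,
`(1/K)∑_{k<K} E‖∇f(xᵏ)‖² ≤ 2Δ/(γK) + 2pσ²/B + 2σ²/(pKB₀)` with `Δ = f(x⁰) − f*`.
(The expectation is over the i.i.d. product of the initialization samples and the
per-iteration minibatch samples; only the samples `ξ⁰, …, ξ^{K−1}` influence
`x⁰, …, x^{K−1}`, and they are supplied via a `Fin K`-indexed product.) -/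
theorem rennalaMVR_iteration_bound
    (d : ℕ) (hd : 1 ≤ d) {Ω : Type*} [MeasurableSpace Ω]
    (μ : Measure Ω) [IsProbabilityMeasure μ]
    (f : EuclideanSpace ℝ (Fin d) → ℝ) (hf : Differentiable ℝ f)
    (fstar : ℝ) (hfstar : ∀ x, fstar ≤ f x)
    (G : EuclideanSpace ℝ (Fin d) → Ω → EuclideanSpace ℝ (Fin d))
    (hGmeas : Measurable fun q : (EuclideanSpace ℝ (Fin d)) × Ω => G q.1 q.2)
    (hGint : ∀ x, Integrable (G x) μ)
    (hUnbiased : ∀ x, (∫ ξ, G x ξ ∂μ) = gradient f x)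
    (σ : ℝ) (hσ : 0 ≤ σ)
    (hVarInt : ∀ x, Integrable (fun ξ => ‖G x ξ - gradient f x‖ ^ 2) μ)
    (hVar : ∀ x, (∫ ξ, ‖G x ξ - gradient f x‖ ^ 2 ∂μ) ≤ σ ^ 2)
    (Lbar : ℝ) (hLbar : 0 < Lbar)
    (hMSint : ∀ x y, Integrable (fun ξ => ‖G x ξ - G y ξ‖ ^ 2) μ)
    (hMS : ∀ x y, (∫ ξ, ‖G x ξ - G y ξ‖ ^ 2 ∂μ) ≤ Lbar ^ 2 * ‖x - y‖ ^ 2)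
    (B₀ B : ℕ) (hB₀ : 1 ≤ B₀) (hB : 1 ≤ B)
    (p : ℝ) (hp : p ∈ Set.Ioc (0 : ℝ) 1)
    (γ : ℝ) (hγpos : 0 < γ)
    (hγ : γ ≤ 1 / (2 * Lbar * (1 + (1 - p) / Real.sqrt (p * B))))
    (x0 : EuclideanSpace ℝ (Fin d)) :
    ∀ (K : ℕ) (hK : 1 ≤ K),
      (1 / K : ℝ) * ∑ k ∈ Finset.range K,
          ∫ ω : (Fin B₀ → Ω) × (Fin K → Fin B → Ω),
            ‖gradient f ((rennalaMVR G γ p B₀ B x0 ω.1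
                (fun k' => ω.2 ⟨k' % K, Nat.mod_lt _ hK⟩) k).1)‖ ^ 2
            ∂((Measure.pi fun _ => μ).prod
                (Measure.pi fun _ => Measure.pi fun _ => μ))
        ≤ 2 * (f x0 - fstar) / (γ * K) + 2 * p * σ ^ 2 / B
            + 1 / (p * K) * (2 * σ ^ 2 / B₀) := by
  intro K hK
  obtain ⟨hp0, hp1⟩ := hp
  have hBR : (0 : ℝ) < B := by exact_mod_cast hB
  have hB0R : (0 : ℝ) < B₀ := by exact_mod_cast hB₀
  have hKR : (0 : ℝ) < K := by exact_mod_cast hK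
  have hvs := RMVR.var_step μ f G hGmeas hGint hUnbiased σ hVarInt hVar Lbar hMSint hMS
  -- Lipschitz gradient
  have hLip : ∀ x y, ‖gradient f x - gradient f y‖ ≤ Lbar * ‖x - y‖ := by
    intro x y
    have hW := RMVR.var_le μ (fun ξ => G x ξ - G y ξ) ((hGint x).sub (hGint y)) (hMSint x y)
    rw [integral_sub (hGint x) (hGint y), hUnbiased, hUnbiased] at hW
    have h1 := hMS x y
    have h2 : 0 ≤ ∫ ξ, ‖G x ξ - G y ξ - (gradient f x - gradient f y)‖ ^ 2 ∂μ :=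
      integral_nonneg fun ξ => by positivity
    refine le_of_sq_le_sq ?_ (by positivity)
    rw [mul_pow]; linarith [hW.2]
  have hgc : Continuous (gradient f) :=
    (LipschitzWith.of_dist_le_mul (K := Lbar.toNNReal) (fun x y => by
      rw [dist_eq_norm, dist_eq_norm, Real.coe_toNNReal _ hLbar.le]; exact hLip x y)).continuous
  have hgm : Measurable (gradient f) := hgc.measurable
  have hfm : Measurable f := hf.continuous.measurable
  set a : ℝ := (1 - p) / Real.sqrt (p * B) with ha
  have ha0 : 0 ≤ a := div_nonneg (by linarith) (Real.sqrt_nonneg _)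
  have ha2 : a ^ 2 = (1 - p) ^ 2 / (p * B) := by
    rw [ha, div_pow, Real.sq_sqrt (by positivity)]
  obtain ⟨hc1, hc2⟩ := RMVR.scalar_cond Lbar a γ hLbar ha0 hγpos hγ
  set c : ℝ := 1 / (2 * γ) - Lbar / 2 with hc
  -- pointwise descent
  have hdesc : ∀ s : EuclideanSpace ℝ (Fin d) × EuclideanSpace ℝ (Fin d),
      (f (s.1 - γ • s.2) - fstar) + γ / 2 * ‖gradient f s.1‖ ^ 2 + c * ‖γ • s.2‖ ^ 2
        ≤ (f s.1 - fstar) + γ / 2 * ‖s.2 - gradient f s.1‖ ^ 2 := by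
    intro s
    have h := RMVR.descent f hf Lbar hLip s.1 (-(γ • s.2))
    rw [← sub_eq_add_neg, norm_neg, inner_neg_right, inner_smul_right] at h
    have e := norm_sub_sq_real s.2 (gradient f s.1)
    rw [real_inner_comm] at e
    have e2 : ‖γ • s.2‖ ^ 2 = γ ^ 2 * ‖s.2‖ ^ 2 := by
      rw [norm_smul, mul_pow, Real.norm_eq_abs, sq_abs]
    have e3 : c * ‖γ • s.2‖ ^ 2 = γ / 2 * ‖s.2‖ ^ 2 - Lbar / 2 * ‖γ • s.2‖ ^ 2 := by
      rw [hc, sub_mul, e2]; field_simp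
    rw [e3, e]
    linarith
  set ν := RMVR.law μ G γ p B₀ B x0 with hν
  have hprob : ∀ k, IsProbabilityMeasure (ν k) := RMVR.law_prob μ G γ p B₀ B x0 hGmeas
  set S : Type := EuclideanSpace ℝ (Fin d) × EuclideanSpace ℝ (Fin d) with hS
  let φ : S → ℝ := fun s => f s.1 - fstar
  let V : S → ℝ := fun s => ‖s.2 - gradient f s.1‖ ^ 2
  let N : S → ℝ := fun s => ‖gradient f s.1‖ ^ 2
  let D : S → ℝ := fun s => ‖γ • s.2‖ ^ 2
  have mφ : Measurable φ := (hfm.comp measurable_fst).sub_const _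
  have mV : Measurable V := (measurable_snd.sub (hgm.comp measurable_fst)).norm.pow_const 2
  have mN : Measurable N := (hgm.comp measurable_fst).norm.pow_const 2
  have mD : Measurable D := (measurable_snd.const_smul γ).norm.pow_const 2
  have nφ : ∀ s, 0 ≤ φ s := fun s => sub_nonneg.2 (hfstar _)
  have nV : ∀ s, 0 ≤ V s := fun s => sq_nonneg _
  have nN : ∀ s, 0 ≤ N s := fun s => sq_nonneg _
  have nD : ∀ s, 0 ≤ D s := fun s => sq_nonneg _
  have mstep := RMVR.step_meas G γ p B hGmeas
  -- domination
  have hdom : ∀ k, Integrable φ (ν k) → Integrable V (ν k) →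
      Integrable (fun s : S => f (s.1 - γ • s.2) - fstar) (ν k) ∧ Integrable N (ν k)
        ∧ Integrable D (ν k) := by
    intro k h1 h2
    have hb : Integrable (fun s => φ s + γ / 2 * V s) (ν k) := h1.add (h2.const_mul _)
    have mφ1 : Measurable (fun s : S => f (s.1 - γ • s.2) - fstar) :=
      (hfm.comp (measurable_fst.sub (measurable_snd.const_smul γ))).sub_const _
    have hall : ∀ s : S, (f (s.1 - γ • s.2) - fstar) + γ / 2 * N s + c * D s
        ≤ φ s + γ / 2 * V s := hdesc
    have n1 : ∀ s : S, 0 ≤ f (s.1 - γ • s.2) - fstar := fun s => sub_nonneg.2 (hfstar _)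
    have n2 : ∀ s : S, 0 ≤ γ / 2 * N s := fun s => mul_nonneg (by positivity) (nN s)
    have n3 : ∀ s : S, 0 ≤ c * D s := fun s => mul_nonneg hc2.le (nD s)
    refine ⟨?_, ?_, ?_⟩
    · refine hb.mono' mφ1.aestronglyMeasurable (Filter.Eventually.of_forall fun s => ?_)
      rw [Real.norm_of_nonneg (n1 s)]
      linarith [hall s, n2 s, n3 s]
    · have : Integrable (fun s => γ / 2 * N s) (ν k) := by
        refine hb.mono' (mN.const_mul _).aestronglyMeasurable
          (Filter.Eventually.of_forall fun s => ?_)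
        rw [Real.norm_of_nonneg (n2 s)]
        linarith [hall s, n1 s, n3 s]
      exact (integrable_const_mul_iff (IsUnit.mk0 _ (by positivity)) _).1 this
    · have : Integrable (fun s => c * D s) (ν k) := by
        refine hb.mono' (mD.const_mul _).aestronglyMeasurable
          (Filter.Eventually.of_forall fun s => ?_)
        rw [Real.norm_of_nonneg (n3 s)]
        linarith [hall s, n1 s, n2 s]
      exact (integrable_const_mul_iff (IsUnit.mk0 _ hc2.ne') _).1 this
  -- variance recursion, inner
  have hinner : ∀ s : S,
      Integrable (fun w => V (RMVR.step G γ p B (s, w))) (Measure.pi fun _ : Fin B => μ) ∧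
      ∫ w, V (RMVR.step G γ p B (s, w)) ∂(Measure.pi fun _ : Fin B => μ)
        ≤ (1 - p) ^ 2 * V s + (2 * p ^ 2 * σ ^ 2 + 2 * (1 - p) ^ 2 * Lbar ^ 2 * D s) / B := by
    intro s
    obtain ⟨z1, z2, z3, z4, z5⟩ := hvs p s.1 (s.1 - γ • s.2)
    have h := RMVR.sq_avg μ _ z1 z2 z3 z4 B hB ((1 - p) • (s.2 - gradient f s.1))
    have e : ∀ w : Fin B → Ω, V (RMVR.step G γ p B (s, w))
        = ‖(1 - p) • (s.2 - gradient f s.1) + (B : ℝ)⁻¹ • ∑ j,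
          ((G (s.1 - γ • s.2) (w j) - gradient f (s.1 - γ • s.2))
            - (1 - p) • (G s.1 (w j) - gradient f s.1))‖ ^ 2 := by
      intro w
      simp only [V, RMVR.step]
      congr 2
      rw [Finset.sum_sub_distrib, Finset.sum_sub_distrib, ← Finset.smul_sum,
        Finset.sum_sub_distrib]
      simp only [Finset.sum_const, Finset.card_univ, Fintype.card_fin, ← Nat.cast_smul_eq_nsmul ℝ]
      have hB' : (B : ℝ) ≠ 0 := hBR.ne'
      match_scalars <;> field_simp <;> ring
    simp only [e]
    refine ⟨h.1, h.2.le.trans ?_⟩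
    have e1 : ‖(1 - p) • (s.2 - gradient f s.1)‖ ^ 2 = (1 - p) ^ 2 * V s := by
      rw [norm_smul, mul_pow, Real.norm_eq_abs, sq_abs]
    have e2 : ‖s.1 - γ • s.2 - s.1‖ ^ 2 = D s := by
      rw [sub_sub_cancel_left, norm_neg]
    rw [e2] at z5
    rw [e1]
    gcongr
  have hsucc : ∀ k, Integrable φ (ν k) → Integrable V (ν k) →
      (Integrable φ (ν (k + 1)) ∧ ∫ s, φ s ∂(ν (k + 1)) = ∫ s, f (s.1 - γ • s.2) - fstar ∂(ν k))
      ∧ (Integrable V (ν (k + 1)) ∧ ∫ s, V s ∂(ν (k + 1)) ≤ (1 - p) ^ 2 * ∫ s, V s ∂(ν k)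
          + (2 * p ^ 2 * σ ^ 2 + 2 * (1 - p) ^ 2 * Lbar ^ 2 * ∫ s, D s ∂(ν k)) / B) := by
    intro k h1 h2
    obtain ⟨d1, d2, d3⟩ := hdom k h1 h2
    have := hprob k
    have hlaw : ν (k + 1) = ((ν k).prod (Measure.pi fun _ : Fin B => μ)).map
      (RMVR.step G γ p B) := rfl
    have hub : Integrable (fun s => (1 - p) ^ 2 * V s
        + (2 * p ^ 2 * σ ^ 2 + 2 * (1 - p) ^ 2 * Lbar ^ 2 * D s) / B) (ν k) :=
      (h2.const_mul _).add (((integrable_const _).add (d3.const_mul _)).div_const _)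
    have mVs : Measurable (fun q => V (RMVR.step G γ p B q)) := mV.comp mstep
    have hin2 : Integrable (fun s => ∫ w, V (RMVR.step G γ p B (s, w))
        ∂(Measure.pi fun _ : Fin B => μ)) (ν k) := by
      refine hub.mono' mVs.aestronglyMeasurable.integral_prod_right'
        (Filter.Eventually.of_forall fun s => ?_)
      rw [Real.norm_of_nonneg (integral_nonneg fun w => nV _)]
      exact (hinner s).2
    have hVi : Integrable (fun q => V (RMVR.step G γ p B q))
        ((ν k).prod (Measure.pi fun _ : Fin B => μ)) := by
      rw [integrable_prod_iff mVs.aestronglyMeasurable]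
      refine ⟨Filter.Eventually.of_forall fun s => (hinner s).1, ?_⟩
      simpa only [Real.norm_of_nonneg (nV _)] using hin2
    rw [hlaw]
    refine ⟨⟨?_, ?_⟩, ?_, ?_⟩
    · rw [integrable_map_measure mφ.aestronglyMeasurable mstep.aemeasurable]
      exact d1.comp_fst _
    · rw [integral_map mstep.aemeasurable mφ.aestronglyMeasurable]
      have := integral_fun_fst (μ := ν k) (ν := Measure.pi fun _ : Fin B => μ)
        (fun s : S => f (s.1 - γ • s.2) - fstar)
      rw [probReal_univ, one_smul] at this
      exact this
    · rw [integrable_map_measure mV.aestronglyMeasurable mstep.aemeasurable]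
      exact hVi
    · rw [integral_map mstep.aemeasurable mV.aestronglyMeasurable, integral_prod _ hVi]
      refine (integral_mono hin2 hub fun s => (hinner s).2).trans (le_of_eq ?_)
      have i3 : Integrable (fun s => 2 * p ^ 2 * σ ^ 2 + 2 * (1 - p) ^ 2 * Lbar ^ 2 * D s) (ν k) :=
        (integrable_const _).add (d3.const_mul _)
      rw [integral_add (h2.const_mul _) (i3.div_const _),
        integral_const_mul, integral_div, integral_add (integrable_const _) (d3.const_mul _),
        integral_const, probReal_univ, one_smul, integral_const_mul]
  -- initial
  have minit := RMVR.init_meas G B₀ x0 hGmeas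
  have hlaw0 : ν 0 = (Measure.pi fun _ : Fin B₀ => μ).map (RMVR.init G B₀ x0) := rfl
  have hinit : (Integrable φ (ν 0) ∧ ∫ s, φ s ∂(ν 0) = f x0 - fstar) ∧
      (Integrable V (ν 0) ∧ ∫ s, V s ∂(ν 0) ≤ σ ^ 2 / B₀) := by
    have hc : Integrable (fun ξ => G x0 ξ - gradient f x0) μ :=
      (hGint x0).sub (integrable_const _)
    have hc0 : ∫ ξ, G x0 ξ - gradient f x0 ∂μ = 0 := by
      rw [integral_sub (hGint x0) (integrable_const _), hUnbiased]; simp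
    have h := RMVR.sq_avg μ (fun ξ => G x0 ξ - gradient f x0)
      ((hGmeas.comp (measurable_const.prodMk measurable_id)).sub_const _) hc (hVarInt x0) hc0
      B₀ hB₀ 0
    have e : ∀ w : Fin B₀ → Ω, V (RMVR.init G B₀ x0 w)
        = ‖0 + (B₀ : ℝ)⁻¹ • ∑ j, (G x0 (w j) - gradient f x0)‖ ^ 2 := by
      intro w
      simp only [V, RMVR.init]
      congr 2
      rw [Finset.sum_sub_distrib]
      simp only [Finset.sum_const, Finset.card_univ, Fintype.card_fin, ← Nat.cast_smul_eq_nsmul ℝ]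
      have hB' : (B₀ : ℝ) ≠ 0 := hB0R.ne'
      match_scalars <;> field_simp
    simp only [← e] at h
    rw [hlaw0]
    refine ⟨⟨?_, ?_⟩, ?_, ?_⟩
    · rw [integrable_map_measure mφ.aestronglyMeasurable minit.aemeasurable]
      exact integrable_const (f x0 - fstar)
    · rw [integral_map minit.aemeasurable mφ.aestronglyMeasurable]
      simp [φ, RMVR.init]
    · rw [integrable_map_measure mV.aestronglyMeasurable minit.aemeasurable]
      exact h.1
    · rw [integral_map minit.aemeasurable mV.aestronglyMeasurable, h.2]
      simp only [norm_zero, ne_eq, OfNat.ofNat_ne_zero, not_false_eq_true, zero_pow, zero_add]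
      gcongr
      exact hVar x0
  have hint : ∀ k, Integrable φ (ν k) ∧ Integrable V (ν k) := by
    intro k
    induction k with
    | zero => exact ⟨hinit.1.1, hinit.2.1⟩
    | succ k ih => exact ⟨(hsucc k ih.1 ih.2).1.1, (hsucc k ih.1 ih.2).2.1⟩
  have hrec := RMVR.recursion (fun k => ∫ s, N s ∂(ν k)) (fun k => ∫ s, V s ∂(ν k))
    (fun k => ∫ s, D s ∂(ν k)) (fun k => ∫ s, φ s ∂(ν k)) γ p c (2 * p * σ ^ 2 / B)
    (2 * Lbar ^ 2 * a ^ 2) hγpos hp0 hp1 (fun k => integral_nonneg nV)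
    (fun k => integral_nonneg nD)
    (by
      intro k
      obtain ⟨i1, i2⟩ := hint k
      obtain ⟨d1, d2, d3⟩ := hdom k i1 i2
      have j1 : Integrable (fun s : S => f (s.1 - γ • s.2) - fstar + γ / 2 * N s) (ν k) :=
        d1.add (d2.const_mul (γ / 2))
      have j2 : Integrable (fun s : S => f (s.1 - γ • s.2) - fstar + γ / 2 * N s + c * D s) (ν k) :=
        j1.add (d3.const_mul c)
      have j3 : Integrable (fun s : S => φ s + γ / 2 * V s) (ν k) := i1.add (i2.const_mul (γ / 2))
      have h := integral_mono j2 j3 hdesc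
      rw [integral_add j1 (d3.const_mul c), integral_add i1 (i2.const_mul (γ / 2)),
        integral_add d1 (d2.const_mul (γ / 2)),
        integral_const_mul, integral_const_mul, integral_const_mul] at h
      rw [(hsucc k i1 i2).1.2]
      exact h)
    (by
      intro k
      obtain ⟨i1, i2⟩ := hint k
      refine (hsucc k i1 i2).2.2.trans (le_of_eq ?_)
      rw [ha2]
      field_simp
      ring)
    (by linarith) K
  rw [hinit.1.2] at hrec
  have hfin : ∀ k ∈ Finset.range K, ∫ ω : (Fin B₀ → Ω) × (Fin K → Fin B → Ω),
            ‖gradient f ((rennalaMVR G γ p B₀ B x0 ω.1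
                (fun k' => ω.2 ⟨k' % K, Nat.mod_lt _ hK⟩) k).1)‖ ^ 2
            ∂((Measure.pi fun _ => μ).prod
                (Measure.pi fun _ => Measure.pi fun _ => μ)) = ∫ s, N s ∂(ν k) := by
    intro k hk
    rw [hν, ← RMVR.law_eq μ G γ p B₀ B x0 hGmeas K hK k (Finset.mem_range.1 hk).le]
    have hm : Measurable (fun ω : (Fin B₀ → Ω) × (Fin K → Fin B → Ω) =>
        rennalaMVR G γ p B₀ B x0 ω.1 (fun k' => ω.2 ⟨k' % K, Nat.mod_lt _ hK⟩) k) :=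
      (RMVR.rec_meas G γ p B₀ B x0 hGmeas k).comp
        (measurable_fst.prodMk (measurable_pi_iff.2 fun n =>
          (measurable_pi_apply _).comp measurable_snd))
    rw [integral_map hm.aemeasurable mN.aestronglyMeasurable]
  rw [Finset.sum_congr rfl hfin]
  set Tot := ∑ k ∈ Finset.range K, ∫ s, N s ∂(ν k) with hTot
  have q1 : 0 ≤ ∫ s, φ s ∂(ν K) := integral_nonneg nφ
  have q2 : 0 ≤ γ / (2 * p) * ∫ s, V s ∂(ν K) := mul_nonneg (by positivity) (integral_nonneg nV)
  have q3 := mul_le_mul_of_nonneg_left hinit.2.2 (by positivity : 0 ≤ γ / (2 * p))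
  have q4 : γ / 2 * Tot ≤ (f x0 - fstar) + γ / (2 * p) * (σ ^ 2 / B₀)
      + K * (γ / 2 * (2 * p * σ ^ 2 / B)) := by linarith
  have q5 := mul_le_mul_of_nonneg_left q4 (by positivity : 0 ≤ 2 / (γ * K))
  have e1 : 2 / (γ * K) * (γ / 2 * Tot) = 1 / K * Tot := by field_simp
  have e2 : 2 / (γ * K) * ((f x0 - fstar) + γ / (2 * p) * (σ ^ 2 / B₀)
      + K * (γ / 2 * (2 * p * σ ^ 2 / B)))
      = 2 * (f x0 - fstar) / (γ * K) + 2 * p * σ ^ 2 / B + 1 / (p * K) * (σ ^ 2 / B₀) := by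
    field_simp
    ring
  rw [e1, e2] at q5
  refine q5.trans ?_
  have : 1 / (p * K) * (σ ^ 2 / B₀) ≤ 1 / (p * K) * (2 * σ ^ 2 / B₀) := by
    gcongr
    nlinarith [sq_nonneg σ]
  linarith
end

section
/- Consider the Rennala MVR iteration of the previous setting and fix ε > 0 with ε < σ² and ε < 2L̄Δ, where Δ = f(x⁰) − f*. Choose γ = 1/(4L̄), p = √ε/σ, B₀ = ⌈6σ²/ε⌉, and B = ⌈6σ/√ε⌉. Then for every K ≥ 24ΔL̄/ε + σ/√ε, the iterates satisfy (1/K)∑_{k=0}^{K−1} E[‖∇f(x^k)‖²] ≤ ε. -/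
open MeasureTheory

section RennalaHelpers

lemma rmvr_resample {δ X : Type*} [Fintype δ] [DecidableEq δ] [MeasurableSpace X]
    (μ : Measure X) [IsProbabilityMeasure μ] (F : (δ → X) → ENNReal) (hF : Measurable F) (i : δ) :
    ∫⁻ ω, F ω ∂(Measure.pi fun _ : δ => μ)
      = ∫⁻ ω, ∫⁻ y, F (Function.update ω i y) ∂μ ∂(Measure.pi fun _ : δ => μ) := by
  have h1 : lmarginal (fun _ : δ => μ) {i} F = fun x => ∫⁻ y, F (Function.update x i y) ∂μ :=
    lmarginal_singleton F i
  have h2 : Measurable (fun x => ∫⁻ y, F (Function.update x i y) ∂μ) := by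
    rw [← h1]; exact hF.lmarginal _
  refine lintegral_eq_of_lmarginal_eq (μ := fun _ : δ => μ) {i} hF h2 ?_
  rw [lmarginal_singleton (μ := fun _ : δ => μ) (fun x => ∫⁻ y, F (Function.update x i y) ∂μ) i, h1]
  funext x
  simp

variable {E : Type*} [NormedAddCommGroup E] [InnerProductSpace ℝ E] [CompleteSpace E]

lemma rmvr_single {Ω : Type*} [MeasurableSpace Ω] (μ : Measure Ω) [IsProbabilityMeasure μ]
    (U : Ω → E) (hU : Integrable U μ) (hU0 : ∫ ω, U ω ∂μ = 0)
    (hU2 : Integrable (fun ω => ‖U ω‖ ^ 2) μ) (V : ℝ) (hV : ∫ ω, ‖U ω‖ ^ 2 ∂μ ≤ V)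
    (b : E) (c : ℝ) :
    ∫⁻ ω, ENNReal.ofReal (‖b + c • U ω‖ ^ 2) ∂μ ≤ ENNReal.ofReal (‖b‖ ^ 2 + c ^ 2 * V) := by
  have hexp : ∀ ω, ‖b + c • U ω‖ ^ 2 = ‖b‖ ^ 2 + 2 * c * inner ℝ b (U ω) + c ^ 2 * ‖U ω‖ ^ 2 := by
    intro ω
    rw [norm_add_sq_real, inner_smul_right, norm_smul, mul_pow, Real.norm_eq_abs, sq_abs]
    ring
  have hi : Integrable (fun ω => inner ℝ b (U ω)) μ := hU.const_inner b
  have hint : Integrable (fun ω => ‖b‖ ^ 2 + 2 * c * inner ℝ b (U ω) + c ^ 2 * ‖U ω‖ ^ 2) μ :=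
    ((integrable_const _).add (hi.const_mul _)).add (hU2.const_mul _)
  simp_rw [hexp]
  rw [← ofReal_integral_eq_lintegral_ofReal hint
    (Filter.Eventually.of_forall fun ω => by
      have := hexp ω
      simp only [Pi.zero_apply]
      rw [← this]; positivity)]
  apply ENNReal.ofReal_le_ofReal
  have hint1 : Integrable (fun ω => ‖b‖ ^ 2 + 2 * c * inner ℝ b (U ω)) μ :=
    (integrable_const _).add (hi.const_mul _)
  rw [integral_add hint1 (hU2.const_mul _),
    integral_add (integrable_const _) (hi.const_mul _), integral_const_mul, integral_const_mul,
    integral_inner hU, hU0]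
  simp
  gcongr

lemma rmvr_batch {Ω δ : Type*} [Fintype δ] [MeasurableSpace Ω] [MeasurableSpace E] [BorelSpace E]
    [SecondCountableTopology E] (μ : Measure Ω)
    [IsProbabilityMeasure μ]
    (U : Ω → E) (hUm : Measurable U) (hU : Integrable U μ) (hU0 : ∫ ω, U ω ∂μ = 0)
    (hU2 : Integrable (fun ω => ‖U ω‖ ^ 2) μ) (V : ℝ) (hV : ∫ ω, ‖U ω‖ ^ 2 ∂μ ≤ V)
    (a : E) (c : ℝ) (s : Finset δ) :
    ∫⁻ ω, ENNReal.ofReal (‖a + c • ∑ j ∈ s, U (ω j)‖ ^ 2) ∂(Measure.pi fun _ : δ => μ)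
      ≤ ENNReal.ofReal (‖a‖ ^ 2 + s.card * (c ^ 2 * V)) := by
  classical
  have hV0 : 0 ≤ V := le_trans (integral_nonneg fun ω => by positivity) hV
  induction s using Finset.induction_on with
  | empty => simp
  | insert i s hi ih =>
    rw [rmvr_resample μ _ (by fun_prop) i]
    have key : ∀ ω : δ → Ω,
        ∫⁻ y, ENNReal.ofReal (‖a + c • ∑ j ∈ insert i s, U (Function.update ω i y j)‖ ^ 2) ∂μ
        ≤ ENNReal.ofReal (‖a + c • ∑ j ∈ s, U (ω j)‖ ^ 2) + ENNReal.ofReal (c ^ 2 * V) := by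
      intro ω
      have h : ∀ y, a + c • ∑ j ∈ insert i s, U (Function.update ω i y j)
          = (a + c • ∑ j ∈ s, U (ω j)) + c • U y := by
        intro y
        rw [Finset.sum_insert hi, Function.update_self]
        have : ∑ j ∈ s, U (Function.update ω i y j) = ∑ j ∈ s, U (ω j) := by
          refine Finset.sum_congr rfl fun j hj => ?_
          rw [Function.update_of_ne]
          rintro rfl; exact hi hj
        rw [this, smul_add]; abel
      simp_rw [h]
      refine (rmvr_single μ U hU hU0 hU2 V hV _ c).trans ?_
      rw [ENNReal.ofReal_add (by positivity) (by positivity)]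
    refine (lintegral_mono key).trans ?_
    rw [lintegral_add_right _ measurable_const]
    refine (add_le_add_left ih _).trans ?_
    rw [lintegral_const, measure_univ, mul_one, ← ENNReal.ofReal_add (by positivity) (by positivity)]
    apply ENNReal.ofReal_le_ofReal
    rw [Finset.card_insert_of_notMem hi]
    push_cast
    linarith

lemma rmvr_descent (f : E → ℝ) (hf : Differentiable ℝ f) (L : ℝ) (hL : 0 ≤ L)
    (hlip : ∀ x y, ‖gradient f x - gradient f y‖ ≤ L * ‖x - y‖) (x y : E) :
    f y ≤ f x + inner ℝ (gradient f x) (y - x) + L * ‖y - x‖ ^ 2 := by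
  obtain ⟨z, hz, h⟩ := domain_mvt (f := f) (f' := fun x => fderiv ℝ f x) (s := Set.univ) (x := x)
    (y := y) (fun x _ => (hf x).hasFDerivAt.hasFDerivWithinAt) convex_univ trivial trivial
  have h2 : f y - f x = inner ℝ (gradient f z) (y - x) := by
    rw [inner_gradient_left]; exact h
  have hzx : ‖z - x‖ ≤ ‖y - x‖ := by
    have := norm_sub_le_of_mem_segment hz
    simpa using this
  have h3 : inner ℝ (gradient f z - gradient f x) (y - x) ≤ L * ‖y - x‖ ^ 2 := by
    refine (real_inner_le_norm _ _).trans ?_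
    calc _ ≤ (L * ‖z - x‖) * ‖y - x‖ := by gcongr; exact hlip _ _
      _ ≤ (L * ‖y - x‖) * ‖y - x‖ := by gcongr
      _ = _ := by ring
  rw [inner_sub_left] at h3
  linarith

lemma rmvr_jensen {Ω : Type*} [MeasurableSpace Ω] (μ : Measure Ω) [IsProbabilityMeasure μ]
    (D : Ω → E) (hD : Integrable D μ) (hD2 : Integrable (fun ω => ‖D ω‖ ^ 2) μ) :
    ‖∫ ω, D ω ∂μ‖ ^ 2 ≤ ∫ ω, ‖D ω‖ ^ 2 ∂μ := by
  set m := ∫ ω, D ω ∂μ with hm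
  have hi : Integrable (fun ω => inner ℝ m (D ω)) μ := hD.const_inner m
  have h1 : ∫ ω, (2 * inner ℝ m (D ω) - ‖m‖ ^ 2) ∂μ ≤ ∫ ω, ‖D ω‖ ^ 2 ∂μ := by
    refine integral_mono ((hi.const_mul 2).sub (integrable_const _)) hD2 fun ω => ?_
    have := norm_sub_sq_real m (D ω)
    have h0 := sq_nonneg ‖m - D ω‖
    simp only
    linarith
  rw [integral_sub (hi.const_mul 2) (integrable_const _), integral_const_mul, integral_inner hD,
    ← hm, real_inner_self_eq_norm_sq] at h1
  simp at h1
  linarith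

lemma rmvr_lip {Ω : Type*} [MeasurableSpace Ω] (μ : Measure Ω) [IsProbabilityMeasure μ]
    (f : E → ℝ) (G : E → Ω → E) (hGint : ∀ x, Integrable (G x) μ)
    (hUnbiased : ∀ x, (∫ ξ, G x ξ ∂μ) = gradient f x)
    (L : ℝ) (hL : 0 < L)
    (hMSint : ∀ x y, Integrable (fun ξ => ‖G x ξ - G y ξ‖ ^ 2) μ)
    (hMS : ∀ x y, (∫ ξ, ‖G x ξ - G y ξ‖ ^ 2 ∂μ) ≤ L ^ 2 * ‖x - y‖ ^ 2) (x y : E) :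
    ‖gradient f x - gradient f y‖ ≤ L * ‖x - y‖ := by
  have h := (rmvr_jensen μ (fun ξ => G x ξ - G y ξ) ((hGint x).sub (hGint y)) (hMSint x y)).trans
    (hMS x y)
  rw [integral_sub (hGint x) (hGint y), hUnbiased, hUnbiased, ← mul_pow] at h
  exact (pow_le_pow_iff_left₀ (norm_nonneg _) (by positivity) two_ne_zero).mp h

lemma rmvr_onestep {Ω : Type*} [MeasurableSpace Ω] [MeasurableSpace E] [BorelSpace E]
    [SecondCountableTopology E] (μ : Measure Ω) [IsProbabilityMeasure μ]
    (f : E → ℝ) (hf : Differentiable ℝ f) (fstar : ℝ) (hfstar : ∀ x, fstar ≤ f x)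
    (G : E → Ω → E) (hGm : ∀ x, Measurable (G x)) (hGint : ∀ x, Integrable (G x) μ)
    (hUnbiased : ∀ x, (∫ ξ, G x ξ ∂μ) = gradient f x)
    (σ : ℝ)
    (hVarInt : ∀ x, Integrable (fun ξ => ‖G x ξ - gradient f x‖ ^ 2) μ)
    (hVar : ∀ x, (∫ ξ, ‖G x ξ - gradient f x‖ ^ 2 ∂μ) ≤ σ ^ 2)
    (L : ℝ) (hL : 0 < L)
    (hMSint : ∀ x y, Integrable (fun ξ => ‖G x ξ - G y ξ‖ ^ 2) μ)
    (hMS : ∀ x y, (∫ ξ, ‖G x ξ - G y ξ‖ ^ 2 ∂μ) ≤ L ^ 2 * ‖x - y‖ ^ 2)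
    (ε γ p : ℝ) (hε : 0 < ε) (hγ : γ = 1 / (4 * L)) (hp : 0 < p) (hp1 : p < 1)
    (hpσ : p ^ 2 * σ ^ 2 = ε) (B : ℕ) (hB : 6 ≤ p * B) (x g x' : E) (hx' : x' = x - γ • g) :
    ∫⁻ ξ : Fin B → Ω, ENNReal.ofReal (f x' - fstar + γ / (2 * p) *
        ‖((B : ℝ)⁻¹ • ∑ j, G x' (ξ j) + (1 - p) • (g - (B : ℝ)⁻¹ • ∑ j, G x (ξ j)))
          - gradient f x'‖ ^ 2) ∂(Measure.pi fun _ => μ)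
      + ENNReal.ofReal (γ / 2 * ‖gradient f x‖ ^ 2)
    ≤ ENNReal.ofReal (f x - fstar + γ / (2 * p) * ‖g - gradient f x‖ ^ 2)
      + ENNReal.ofReal (γ * ε / 6) := by
  have hγ0 : 0 < γ := by rw [hγ]; positivity
  have hγL : L * γ = 1 / 4 := by rw [hγ]; field_simp
  have hBpos : (0 : ℝ) < B := by
    by_contra h
    have : (B : ℝ) = 0 := le_antisymm (not_lt.mp h) (Nat.cast_nonneg _)
    rw [this] at hB; linarith
  have hlip := rmvr_lip μ f G hGint hUnbiased L hL hMSint hMS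
  set U : Ω → E := fun ξ => (G x' ξ - gradient f x') - (1 - p) • (G x ξ - gradient f x) with hUdef
  have hUm : Measurable U := by
    have h1 := hGm x; have h2 := hGm x'
    fun_prop
  have hUi : Integrable U μ := ((hGint x').sub (integrable_const _)).sub
    (((hGint x).sub (integrable_const _)).smul _)
  have hc : ∀ z, ∫ ξ, (G z ξ - gradient f z) ∂μ = 0 := by
    intro z
    rw [integral_sub (hGint z) (integrable_const _), hUnbiased]
    simp
  have hU0 : ∫ ξ, U ξ ∂μ = 0 := by
    have hi1 : Integrable (fun ξ => G x' ξ - gradient f x') μ := (hGint x').sub (integrable_const _)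
    have hi2 : Integrable (fun ξ => (1 - p) • (G x ξ - gradient f x)) μ :=
      ((hGint x).sub (integrable_const _)).smul _
    rw [hUdef, integral_sub hi1 hi2, integral_smul, hc, hc]
    simp
  have hxx : ‖x' - x‖ ^ 2 = γ ^ 2 * ‖g‖ ^ 2 := by
    rw [hx', sub_sub_cancel_left, norm_neg, norm_smul, mul_pow, Real.norm_eq_abs, sq_abs]
  have hgg : ‖gradient f x' - gradient f x‖ ^ 2 ≤ ‖g‖ ^ 2 / 16 := by
    have h1 : ‖gradient f x' - gradient f x‖ ^ 2 ≤ (L * ‖x' - x‖) ^ 2 := by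
      gcongr; exact hlip _ _
    rw [mul_pow, hxx, ← mul_assoc, ← mul_pow, hγL] at h1
    linarith
  have hUb : ∀ ξ, ‖U ξ‖ ^ 2 ≤ 2 * p ^ 2 * ‖G x' ξ - gradient f x'‖ ^ 2
      + 4 * ‖G x' ξ - G x ξ‖ ^ 2 + ‖g‖ ^ 2 / 4 := by
    intro ξ
    have hd : U ξ = p • (G x' ξ - gradient f x')
        + (1 - p) • ((G x' ξ - G x ξ) - (gradient f x' - gradient f x)) := by
      rw [hUdef]; module
    have par : ∀ a b : E, ‖a + b‖ ^ 2 ≤ 2 * ‖a‖ ^ 2 + 2 * ‖b‖ ^ 2 := by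
      intro a b
      have h1 := norm_add_sq_real a b
      have h2 := norm_sub_sq_real a b
      have h3 := sq_nonneg ‖a - b‖
      linarith
    have h1 := par (p • (G x' ξ - gradient f x'))
      ((1 - p) • ((G x' ξ - G x ξ) - (gradient f x' - gradient f x)))
    have h2 := par (G x' ξ - G x ξ) (-(gradient f x' - gradient f x))
    rw [← sub_eq_add_neg, norm_neg] at h2
    rw [← hd, norm_smul, norm_smul, mul_pow, mul_pow, Real.norm_eq_abs, Real.norm_eq_abs, sq_abs,
      sq_abs] at h1
    have h3 : (1 - p) ^ 2 * ‖(G x' ξ - G x ξ) - (gradient f x' - gradient f x)‖ ^ 2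
        ≤ 1 * ‖(G x' ξ - G x ξ) - (gradient f x' - gradient f x)‖ ^ 2 := by
      gcongr; nlinarith
    linarith
  have hbi0 : Integrable (fun ξ => 2 * p ^ 2 * ‖G x' ξ - gradient f x'‖ ^ 2
      + 4 * ‖G x' ξ - G x ξ‖ ^ 2) μ :=
    ((hVarInt x').const_mul _).add ((hMSint x' x).const_mul _)
  have hbi : Integrable (fun ξ => 2 * p ^ 2 * ‖G x' ξ - gradient f x'‖ ^ 2
      + 4 * ‖G x' ξ - G x ξ‖ ^ 2 + ‖g‖ ^ 2 / 4) μ := hbi0.add (integrable_const _)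
  have hU2 : Integrable (fun ξ => ‖U ξ‖ ^ 2) μ := by
    refine hbi.mono' (by fun_prop) (Filter.Eventually.of_forall fun ξ => ?_)
    rw [Real.norm_eq_abs, abs_of_nonneg (by positivity)]
    exact hUb ξ
  have hV : ∫ ξ, ‖U ξ‖ ^ 2 ∂μ ≤ 2 * ε + ‖g‖ ^ 2 / 2 := by
    refine (integral_mono hU2 hbi hUb).trans ?_
    rw [integral_add hbi0 (integrable_const _),
      integral_add ((hVarInt x').const_mul _) ((hMSint x' x).const_mul _), integral_const_mul,
      integral_const_mul]
    have h1 := hMS x' x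
    rw [hxx, ← mul_assoc, ← mul_pow, hγL] at h1
    have h2 : p ^ 2 * ∫ ξ, ‖G x' ξ - gradient f x'‖ ^ 2 ∂μ ≤ p ^ 2 * σ ^ 2 := by
      gcongr; exact hVar x'
    simp
    linarith
  have hid : ∀ ξ : Fin B → Ω,
      ((B : ℝ)⁻¹ • ∑ j, G x' (ξ j) + (1 - p) • (g - (B : ℝ)⁻¹ • ∑ j, G x (ξ j))) - gradient f x'
      = (1 - p) • (g - gradient f x) + (B : ℝ)⁻¹ • ∑ j, U (ξ j) := by
    intro ξ
    have hs : ∀ v : E, (B : ℝ)⁻¹ • ((B : ℝ) • v) = v := fun v => by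
      rw [smul_smul, inv_mul_cancel₀ hBpos.ne', one_smul]
    simp only [hUdef, Finset.sum_sub_distrib, ← Finset.smul_sum, Finset.sum_const,
      Finset.card_univ, Fintype.card_fin, ← Nat.cast_smul_eq_nsmul ℝ]
    simp only [smul_sub, hs]
    rw [smul_comm (B : ℝ)⁻¹ (1 - p) ((B : ℝ) • gradient f x), hs]
    rw [smul_comm (B : ℝ)⁻¹ (1 - p)]
    abel
  have hbatch := rmvr_batch μ U hUm hUi hU0 hU2 _ hV ((1 - p) • (g - gradient f x)) (B : ℝ)⁻¹
    (Finset.univ : Finset (Fin B))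
  have hne : ‖(1 - p) • (g - gradient f x)‖ ^ 2
      + ((Finset.univ : Finset (Fin B)).card : ℝ) * ((B : ℝ)⁻¹ ^ 2 * (2 * ε + ‖g‖ ^ 2 / 2))
      ≤ (1 - p) * ‖g - gradient f x‖ ^ 2 + p / 6 * (2 * ε + ‖g‖ ^ 2 / 2) := by
    rw [norm_smul, mul_pow, Real.norm_eq_abs, sq_abs, Finset.card_univ, Fintype.card_fin]
    have h1 : (B : ℝ) * ((B : ℝ)⁻¹ ^ 2 * (2 * ε + ‖g‖ ^ 2 / 2))
        = (B : ℝ)⁻¹ * (2 * ε + ‖g‖ ^ 2 / 2) := by field_simp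
    have h2 : (B : ℝ)⁻¹ ≤ p / 6 := by
      rw [inv_le_iff_one_le_mul₀ hBpos]; linarith
    rw [h1]
    gcongr
    nlinarith
  have hdesc := rmvr_descent f hf L hL.le hlip x x'
  rw [hxx] at hdesc
  have hinner : inner ℝ (gradient f x) (x' - x) = - γ * inner ℝ (gradient f x) g := by
    rw [hx', sub_sub_cancel_left, inner_neg_right, inner_smul_right]; ring
  have hee : ‖g - gradient f x‖ ^ 2
      = ‖g‖ ^ 2 - 2 * inner ℝ (gradient f x) g + ‖gradient f x‖ ^ 2 := by
    rw [norm_sub_sq_real, real_inner_comm]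
  have hA : 0 ≤ f x' - fstar := sub_nonneg.mpr (hfstar _)
  have hA2 : 0 ≤ f x - fstar := sub_nonneg.mpr (hfstar _)
  have hcc : 0 ≤ γ / (2 * p) := by positivity
  have hlhs : ∫⁻ ξ : Fin B → Ω, ENNReal.ofReal (f x' - fstar + γ / (2 * p) *
        ‖((B : ℝ)⁻¹ • ∑ j, G x' (ξ j) + (1 - p) • (g - (B : ℝ)⁻¹ • ∑ j, G x (ξ j)))
          - gradient f x'‖ ^ 2) ∂(Measure.pi fun _ => μ)
      ≤ ENNReal.ofReal (f x' - fstar + γ / (2 * p) *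
        ((1 - p) * ‖g - gradient f x‖ ^ 2 + p / 6 * (2 * ε + ‖g‖ ^ 2 / 2))) := by
    have hp1' : 0 ≤ 1 - p := by linarith
    simp_rw [hid]
    have : ∀ ξ : Fin B → Ω, ENNReal.ofReal (f x' - fstar + γ / (2 * p) *
        ‖(1 - p) • (g - gradient f x) + (B : ℝ)⁻¹ • ∑ j, U (ξ j)‖ ^ 2)
        = ENNReal.ofReal (f x' - fstar) + ENNReal.ofReal (γ / (2 * p)) *
          ENNReal.ofReal (‖(1 - p) • (g - gradient f x) + (B : ℝ)⁻¹ • ∑ j, U (ξ j)‖ ^ 2) := by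
      intro ξ
      rw [ENNReal.ofReal_add hA (by positivity), ENNReal.ofReal_mul hcc]
    simp_rw [this]
    rw [lintegral_add_left measurable_const, lintegral_const_mul _ (by fun_prop), lintegral_const,
      measure_univ, mul_one, ENNReal.ofReal_add hA (by positivity), ENNReal.ofReal_mul hcc]
    gcongr
    exact hbatch.trans (ENNReal.ofReal_le_ofReal hne)
  refine (add_le_add_left hlhs _).trans ?_
  have hp1' : 0 ≤ 1 - p := by linarith
  rw [← ENNReal.ofReal_add (by positivity) (by positivity),
    ← ENNReal.ofReal_add (by positivity) (by positivity)]
  apply ENNReal.ofReal_le_ofReal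
  have e1 : γ / (2 * p) * ((1 - p) * ‖g - gradient f x‖ ^ 2 + p / 6 * (2 * ε + ‖g‖ ^ 2 / 2))
      = γ / (2 * p) * ‖g - gradient f x‖ ^ 2 - γ / 2 * ‖g - gradient f x‖ ^ 2
        + γ * ε / 6 + γ * ‖g‖ ^ 2 / 24 := by
    field_simp
    ring
  rw [e1]
  have e2 : L * (γ ^ 2 * ‖g‖ ^ 2) = γ * ‖g‖ ^ 2 / 4 := by
    calc L * (γ ^ 2 * ‖g‖ ^ 2) = (L * γ) * (γ * ‖g‖ ^ 2) := by ring
      _ = _ := by rw [hγL]; ring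
  rw [e2, hinner] at hdesc
  have e3 : 0 ≤ γ * ‖g‖ ^ 2 := by positivity
  have e4 : γ / 2 * ‖g - gradient f x‖ ^ 2 = γ / 2 * ‖g‖ ^ 2 - γ * inner ℝ (gradient f x) g
      + γ / 2 * ‖gradient f x‖ ^ 2 := by rw [hee]; ring
  linarith

end RennalaHelpers

section RennalaMain

lemma rmvr_state_meas {d : ℕ} {Ω Θ : Type*} [MeasurableSpace Ω] [MeasurableSpace Θ]
    (G : EuclideanSpace ℝ (Fin d) → Ω → EuclideanSpace ℝ (Fin d))
    (hG : Measurable fun q : (EuclideanSpace ℝ (Fin d)) × Ω => G q.1 q.2)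
    (γ p : ℝ) (B₀ B : ℕ) (x0 : EuclideanSpace ℝ (Fin d))
    (ζ : Θ → Fin B₀ → Ω) (hζ : Measurable ζ) (ξ : Θ → ℕ → Fin B → Ω) (hξ : Measurable ξ) (k : ℕ) :
    Measurable fun θ => rennalaMVR G γ p B₀ B x0 (ζ θ) (ξ θ) k := by
  have hc : ∀ (u : Θ → EuclideanSpace ℝ (Fin d)) (v : Θ → Ω), Measurable u → Measurable v →
      Measurable fun θ => G (u θ) (v θ) := fun u v hu hv => hG.comp (hu.prodMk hv)
  induction k with
  | zero =>
    simp only [rennalaMVR]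
    have h0 : ∀ j : Fin B₀, Measurable fun θ => G x0 (ζ θ j) := fun j =>
      hc _ _ measurable_const (by fun_prop)
    fun_prop
  | succ k ih =>
    simp only [rennalaMVR]
    have h1 : Measurable fun θ => (rennalaMVR G γ p B₀ B x0 (ζ θ) (ξ θ) k).1
      - γ • (rennalaMVR G γ p B₀ B x0 (ζ θ) (ξ θ) k).2 := by fun_prop
    have h2 : ∀ j : Fin B, Measurable fun θ => ξ θ k j := fun j => by fun_prop
    have h3 := fun j => hc _ _ h1 (h2 j)
    have h4 := fun j => hc _ _ ih.fst (h2 j)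
    fun_prop

lemma rmvr_state_congr {d : ℕ} {Ω : Type*}
    (G : EuclideanSpace ℝ (Fin d) → Ω → EuclideanSpace ℝ (Fin d))
    (γ p : ℝ) (B₀ B : ℕ) (x0 : EuclideanSpace ℝ (Fin d))
    (ζ : Fin B₀ → Ω) (ξ ξ' : ℕ → Fin B → Ω) (k : ℕ) (h : ∀ n < k, ξ n = ξ' n) :
    rennalaMVR G γ p B₀ B x0 ζ ξ k = rennalaMVR G γ p B₀ B x0 ζ ξ' k := by
  induction k with
  | zero => rfl
  | succ k ih =>
    simp only [rennalaMVR]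
    rw [ih fun n hn => h n (by omega), h k (by omega)]

end RennalaMain

/-- With the tuned parameters `γ = 1/(4L̄)`, `p = √ε/σ`,
`B₀ = ⌈6σ²/ε⌉`, `B = ⌈6σ/√ε⌉` and `ε < σ²`, `ε < 2L̄Δ`, Rennala MVR satisfies
`(1/K)∑_{k<K} E‖∇f(xᵏ)‖² ≤ ε` for every `K ≥ 24ΔL̄/ε + σ/√ε`. -/
theorem rennalaMVR_epsilon_stationarity
    (d : ℕ) (hd : 1 ≤ d) {Ω : Type*} [MeasurableSpace Ω]
    (μ : Measure Ω) [IsProbabilityMeasure μ]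
    (f : EuclideanSpace ℝ (Fin d) → ℝ) (hf : Differentiable ℝ f)
    (fstar : ℝ) (hfstar : ∀ x, fstar ≤ f x)
    (G : EuclideanSpace ℝ (Fin d) → Ω → EuclideanSpace ℝ (Fin d))
    (hGmeas : Measurable fun q : (EuclideanSpace ℝ (Fin d)) × Ω => G q.1 q.2)
    (hGint : ∀ x, Integrable (G x) μ)
    (hUnbiased : ∀ x, (∫ ξ, G x ξ ∂μ) = gradient f x)
    (σ : ℝ) (hσ : 0 < σ)
    (hVarInt : ∀ x, Integrable (fun ξ => ‖G x ξ - gradient f x‖ ^ 2) μ)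
    (hVar : ∀ x, (∫ ξ, ‖G x ξ - gradient f x‖ ^ 2 ∂μ) ≤ σ ^ 2)
    (Lbar : ℝ) (hLbar : 0 < Lbar)
    (hMSint : ∀ x y, Integrable (fun ξ => ‖G x ξ - G y ξ‖ ^ 2) μ)
    (hMS : ∀ x y, (∫ ξ, ‖G x ξ - G y ξ‖ ^ 2 ∂μ) ≤ Lbar ^ 2 * ‖x - y‖ ^ 2)
    (x0 : EuclideanSpace ℝ (Fin d))
    (ε : ℝ) (hε : 0 < ε) (hεσ : ε < σ ^ 2)
    (hεΔ : ε < 2 * Lbar * (f x0 - fstar)) :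
    ∀ (K : ℕ) (hK : 1 ≤ K),
      24 * (f x0 - fstar) * Lbar / ε + σ / Real.sqrt ε ≤ (K : ℝ) →
      (1 / K : ℝ) * ∑ k ∈ Finset.range K,
          ∫ ω : (Fin ⌈6 * σ ^ 2 / ε⌉₊ → Ω) × (Fin K → Fin ⌈6 * σ / Real.sqrt ε⌉₊ → Ω),
            ‖gradient f ((rennalaMVR G (1 / (4 * Lbar)) (Real.sqrt ε / σ)
                ⌈6 * σ ^ 2 / ε⌉₊ ⌈6 * σ / Real.sqrt ε⌉₊ x0 ω.1
                (fun k' => ω.2 ⟨k' % K, Nat.mod_lt _ hK⟩) k).1)‖ ^ 2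
            ∂((Measure.pi fun _ => μ).prod
                (Measure.pi fun _ => Measure.pi fun _ => μ))
        ≤ ε := by
  intro K hK hKb
  set B₀ := ⌈6 * σ ^ 2 / ε⌉₊ with hB₀
  set B := ⌈6 * σ / Real.sqrt ε⌉₊ with hBdef
  set γ := 1 / (4 * Lbar) with hγ
  set p := Real.sqrt ε / σ with hpdef
  have hsε : 0 < Real.sqrt ε := Real.sqrt_pos.mpr hε
  have hsq : Real.sqrt ε ^ 2 = ε := Real.sq_sqrt hε.le
  have hp : 0 < p := by positivity
  have hp1 : p < 1 := by
    rw [hpdef, div_lt_one hσ]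
    exact (Real.sqrt_lt' hσ).mpr hεσ
  have hpσ : p ^ 2 * σ ^ 2 = ε := by
    rw [hpdef, div_pow, hsq]; field_simp
  have hγ0 : 0 < γ := by positivity
  have hBp : 6 ≤ p * B := by
    have h1 : 6 * σ / Real.sqrt ε ≤ B := Nat.le_ceil _
    calc (6 : ℝ) = p * (6 * σ / Real.sqrt ε) := by rw [hpdef]; field_simp
      _ ≤ _ := by gcongr
  have hB₀le : 6 * σ ^ 2 / ε ≤ B₀ := Nat.le_ceil _
  have hB₀pos : (0 : ℝ) < B₀ := lt_of_lt_of_le (by positivity) hB₀le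
  have hKpos : (0 : ℝ) < K := by exact_mod_cast hK
  have hGm : ∀ x, Measurable (G x) := fun x => hGmeas.comp measurable_prodMk_left
  have hlip := rmvr_lip μ f G hGint hUnbiased Lbar hLbar hMSint hMS
  have hgc : Continuous (gradient f) := by
    have : LipschitzWith Lbar.toNNReal (gradient f) := by
      refine LipschitzWith.of_dist_le_mul fun x y => ?_
      rw [dist_eq_norm, dist_eq_norm, Real.coe_toNNReal _ hLbar.le]
      exact hlip x y
    exact this.continuous
  have hgm : Measurable (gradient f) := hgc.measurable
  have hfm : Measurable f := hf.continuous.measurable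
  set S : (Fin B₀ → Ω) → (Fin K → Fin B → Ω) → ℕ →
      EuclideanSpace ℝ (Fin d) × EuclideanSpace ℝ (Fin d) := fun ζ η k =>
    rennalaMVR G γ p B₀ B x0 ζ (fun k' => η ⟨k' % K, Nat.mod_lt _ hK⟩) k with hS
  have hSm2 : ∀ k, Measurable fun ω : (Fin B₀ → Ω) × (Fin K → Fin B → Ω) => S ω.1 ω.2 k := by
    intro k
    exact rmvr_state_meas G hGmeas γ p B₀ B x0 (fun ω : (Fin B₀ → Ω) × (Fin K → Fin B → Ω) => ω.1)
      measurable_fst (fun ω k' => ω.2 ⟨k' % K, Nat.mod_lt _ hK⟩) (by fun_prop) k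
  have hSm : ∀ ζ k, Measurable fun η => S ζ η k := fun ζ k =>
    (hSm2 k).comp measurable_prodMk_left
  set Φ : EuclideanSpace ℝ (Fin d) × EuclideanSpace ℝ (Fin d) → ENNReal := fun s =>
    ENNReal.ofReal (f s.1 - fstar + γ / (2 * p) * ‖s.2 - gradient f s.1‖ ^ 2) with hΦ
  have hΦm : Measurable Φ := by fun_prop
  set I : EuclideanSpace ℝ (Fin d) × EuclideanSpace ℝ (Fin d) → ENNReal := fun s =>
    ENNReal.ofReal (γ / 2 * ‖gradient f s.1‖ ^ 2) with hI
  have hIm : Measurable I := by fun_prop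
  have step : ∀ ζ k, k < K →
      ∫⁻ η, Φ (S ζ η (k + 1)) ∂(Measure.pi fun _ => Measure.pi fun _ => μ)
        + ∫⁻ η, I (S ζ η k) ∂(Measure.pi fun _ => Measure.pi fun _ => μ)
      ≤ ∫⁻ η, Φ (S ζ η k) ∂(Measure.pi fun _ => Measure.pi fun _ => μ)
        + ENNReal.ofReal (γ * ε / 6) := by
    intro ζ k hk
    have hIk : Measurable fun η => I (S ζ η k) := hIm.comp (hSm ζ k)
    rw [rmvr_resample (Measure.pi fun _ : Fin B => μ) (fun η => Φ (S ζ η (k + 1)))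
      (hΦm.comp (hSm ζ (k + 1))) ⟨k, hk⟩, ← lintegral_add_right _ hIk]
    have hc : ENNReal.ofReal (γ * ε / 6) = ∫⁻ η : Fin K → Fin B → Ω, ENNReal.ofReal (γ * ε / 6)
        ∂(Measure.pi fun _ => Measure.pi fun _ => μ) := by simp
    rw [hc, ← lintegral_add_right _ measurable_const]
    refine lintegral_mono fun η => ?_
    have hcongr : ∀ y, S ζ (Function.update η ⟨k, hk⟩ y) k = S ζ η k := by
      intro y
      refine rmvr_state_congr G γ p B₀ B x0 ζ _ _ k fun n hn => ?_
      rw [Function.update_of_ne]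
      intro h
      have := congrArg Fin.val h
      simp only [Nat.mod_eq_of_lt (hn.trans hk)] at this
      omega
    have hsucc : ∀ y, S ζ (Function.update η ⟨k, hk⟩ y) (k + 1)
        = ((S ζ η k).1 - γ • (S ζ η k).2,
          (B : ℝ)⁻¹ • ∑ j, G ((S ζ η k).1 - γ • (S ζ η k).2) (y j)
            + (1 - p) • ((S ζ η k).2 - (B : ℝ)⁻¹ • ∑ j, G (S ζ η k).1 (y j))) := by
      intro y
      rw [← hcongr y]
      have hidx : Function.update η ⟨k, hk⟩ y ⟨k % K, Nat.mod_lt _ hK⟩ = y := by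
        have : (⟨k % K, Nat.mod_lt _ hK⟩ : Fin K) = ⟨k, hk⟩ := Fin.ext (Nat.mod_eq_of_lt hk)
        rw [this, Function.update_self]
      simp only [hS]
      rw [rennalaMVR]
      simp only [hidx]
    simp only [hsucc]
    exact rmvr_onestep μ f hf fstar hfstar G hGm hGint hUnbiased σ hVarInt hVar Lbar hLbar hMSint
      hMS ε γ p hε hγ hp hp1 hpσ B hBp (S ζ η k).1 (S ζ η k).2 _ rfl
  have tele : ∀ ζ n, n ≤ K →
      ∫⁻ η, Φ (S ζ η n) ∂(Measure.pi fun _ => Measure.pi fun _ => μ)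
        + ∑ k ∈ Finset.range n, ∫⁻ η, I (S ζ η k) ∂(Measure.pi fun _ => Measure.pi fun _ => μ)
      ≤ ∫⁻ η, Φ (S ζ η 0) ∂(Measure.pi fun _ => Measure.pi fun _ => μ)
        + n * ENNReal.ofReal (γ * ε / 6) := by
    intro ζ n
    induction n with
    | zero => intro _; simp
    | succ n ih =>
      intro hn
      rw [Finset.sum_range_succ, add_comm (Finset.sum _ _), ← add_assoc]
      refine (add_le_add_left (step ζ n (by omega)) _).trans ?_
      rw [add_right_comm]
      refine (add_le_add_left (ih (by omega)) _).trans ?_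
      push_cast
      rw [add_mul, one_mul, add_assoc]
  have hinit : ∫⁻ ζ, ∫⁻ η, Φ (S ζ η 0) ∂(Measure.pi fun _ => Measure.pi fun _ => μ)
      ∂(Measure.pi fun _ => μ)
      ≤ ENNReal.ofReal (f x0 - fstar + γ / (2 * p) * (ε / 6)) := by
    have hb := rmvr_batch (δ := Fin B₀) μ (fun ξ => G x0 ξ - gradient f x0)
      ((hGm x0).sub measurable_const) ((hGint x0).sub (integrable_const _))
      (by rw [integral_sub (hGint x0) (integrable_const _), hUnbiased]; simp)
      (hVarInt x0) _ (hVar x0) 0 (B₀ : ℝ)⁻¹ Finset.univ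
    have hA : 0 ≤ f x0 - fstar := sub_nonneg.mpr (hfstar _)
    have hcc : 0 ≤ γ / (2 * p) := by positivity
    have he : ∀ ζ η, Φ (S ζ η 0) = ENNReal.ofReal (f x0 - fstar) + ENNReal.ofReal (γ / (2 * p)) *
        ENNReal.ofReal (‖0 + (B₀ : ℝ)⁻¹ • ∑ j, (G x0 (ζ j) - gradient f x0)‖ ^ 2) := by
      intro ζ η
      have h0 : S ζ η 0 = (x0, (B₀ : ℝ)⁻¹ • ∑ j, G x0 (ζ j)) := rfl
      have h1 : 0 + (B₀ : ℝ)⁻¹ • ∑ j, (G x0 (ζ j) - gradient f x0)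
          = (B₀ : ℝ)⁻¹ • ∑ j, G x0 (ζ j) - gradient f x0 := by
        rw [zero_add, Finset.sum_sub_distrib, Finset.sum_const, Finset.card_univ, Fintype.card_fin,
          ← Nat.cast_smul_eq_nsmul ℝ, smul_sub, smul_smul, inv_mul_cancel₀ hB₀pos.ne', one_smul]
      rw [h1, h0, hΦ, ← ENNReal.ofReal_mul hcc, ← ENNReal.ofReal_add hA (by positivity)]
    have hmm : Measurable fun ζ : Fin B₀ → Ω => ENNReal.ofReal
        (‖0 + (B₀ : ℝ)⁻¹ • ∑ j, (G x0 (ζ j) - gradient f x0)‖ ^ 2) := by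
      have := hGm x0
      fun_prop
    simp_rw [he, lintegral_const, measure_univ, mul_one]
    rw [lintegral_add_left measurable_const, lintegral_const_mul _ hmm, lintegral_const,
      measure_univ, mul_one, ENNReal.ofReal_add hA (by positivity), ENNReal.ofReal_mul hcc]
    gcongr
    refine hb.trans (ENNReal.ofReal_le_ofReal ?_)
    rw [Finset.card_univ, Fintype.card_fin, norm_zero]
    have h2 : (0 : ℝ) ^ 2 + (B₀ : ℝ) * ((B₀ : ℝ)⁻¹ ^ 2 * σ ^ 2) = σ ^ 2 / B₀ := by
      field_simp; ring
    rw [h2, div_le_iff₀ hB₀pos]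
    rw [div_le_iff₀ hε] at hB₀le
    linarith
  set P := (Measure.pi fun _ : Fin B₀ => μ).prod
    (Measure.pi fun _ : Fin K => Measure.pi fun _ : Fin B => μ) with hP
  have hIm2 : ∀ k, Measurable fun ω : (Fin B₀ → Ω) × (Fin K → Fin B → Ω) => I (S ω.1 ω.2 k) :=
    fun k => hIm.comp (hSm2 k)
  have hM : ∑ k ∈ Finset.range K, ∫⁻ ω, I (S ω.1 ω.2 k) ∂P
      ≤ ENNReal.ofReal (f x0 - fstar + γ / (2 * p) * (ε / 6) + K * (γ * ε / 6)) := by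
    have h1 : ∀ k, ∫⁻ ω, I (S ω.1 ω.2 k) ∂P = ∫⁻ ζ, ∫⁻ η, I (S ζ η k)
        ∂(Measure.pi fun _ => Measure.pi fun _ => μ) ∂(Measure.pi fun _ => μ) := fun k =>
      lintegral_prod _ (hIm2 k).aemeasurable
    simp_rw [h1]
    rw [← lintegral_finsetSum _ fun k _ => (hIm2 k).lintegral_prod_right']
    have h2 := fun ζ => (le_add_self).trans (tele ζ K le_rfl)
    refine (lintegral_mono h2).trans ?_
    rw [lintegral_add_right _ measurable_const, lintegral_const, measure_univ, mul_one]
    have hA : 0 ≤ f x0 - fstar := sub_nonneg.mpr (hfstar _)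
    rw [ENNReal.ofReal_add (by positivity) (by positivity), ENNReal.ofReal_mul (Nat.cast_nonneg _),
      ENNReal.ofReal_natCast]
    gcongr
  have hint : ∀ k, γ / 2 * ∫ ω, ‖gradient f (S ω.1 ω.2 k).1‖ ^ 2 ∂P
      = (∫⁻ ω, I (S ω.1 ω.2 k) ∂P).toReal := by
    intro k
    rw [← integral_const_mul, integral_eq_lintegral_of_nonneg_ae
      (Filter.Eventually.of_forall fun ω => by simp only [Pi.zero_apply]; positivity)]
    have := hSm2 k
    exact Measurable.aestronglyMeasurable (by fun_prop)
  have hA : 0 ≤ f x0 - fstar := sub_nonneg.mpr (hfstar _)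
  have hfin : γ / 2 * ∑ k ∈ Finset.range K, ∫ ω, ‖gradient f (S ω.1 ω.2 k).1‖ ^ 2 ∂P
      ≤ f x0 - fstar + γ / (2 * p) * (ε / 6) + K * (γ * ε / 6) := by
    rw [Finset.mul_sum]
    simp_rw [hint]
    rw [← ENNReal.toReal_sum]
    · exact ENNReal.toReal_le_of_le_ofReal (by positivity) hM
    · intro k hk
      exact ne_top_of_le_ne_top ENNReal.ofReal_ne_top
        ((Finset.single_le_sum (f := fun k => ∫⁻ ω, I (S ω.1 ω.2 k) ∂P)
          (fun _ _ => zero_le) hk).trans hM)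
  change (1 / K : ℝ) * ∑ k ∈ Finset.range K, ∫ ω, ‖gradient f (S ω.1 ω.2 k).1‖ ^ 2 ∂P ≤ ε
  rw [one_div, inv_mul_le_iff₀ hKpos]
  set T := ∑ k ∈ Finset.range K, ∫ ω, ‖gradient f (S ω.1 ω.2 k).1‖ ^ 2 ∂P with hT
  have hT2 : T ≤ 8 * Lbar * (f x0 - fstar) + σ / Real.sqrt ε * (ε / 6) + K * (ε / 3) := by
    have h1 : f x0 - fstar + γ / (2 * p) * (ε / 6) + K * (γ * ε / 6)
        = γ / 2 * (8 * Lbar * (f x0 - fstar) + σ / Real.sqrt ε * (ε / 6) + K * (ε / 3)) := by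
      rw [hγ, hpdef]; field_simp; ring
    rw [h1] at hfin
    exact le_of_mul_le_mul_left hfin (by positivity)
  have h3 : ε * (24 * (f x0 - fstar) * Lbar / ε + σ / Real.sqrt ε) ≤ ε * K := by gcongr
  have h4 : ε * (24 * (f x0 - fstar) * Lbar / ε + σ / Real.sqrt ε)
      = 24 * (f x0 - fstar) * Lbar + ε * (σ / Real.sqrt ε) := by field_simp
  rw [h4] at h3
  have h5 : 0 ≤ ε * (σ / Real.sqrt ε) := by positivity
  have h6 : 0 ≤ ε * K := by positivity
  linarith
end

section
/- Let n ≥ 1, let 0 < τ₁ ≤ τ₂ ≤ ⋯ ≤ τ_n be real numbers, and let B ≥ 1 be an integer. Define t = 2·min_{m∈[n]} (∑_{i=1}^m 1/τ_i)^{-1}(B + m). Then ∑_{i=1}^n max{⌊t/τ_i⌋ − 1, 0} ≥ B. (Interpretation: n workers, where worker i needs τ_i seconds per stochastic gradient, can jointly produce at least B new gradients within time t from any starting moment, even if each worker must first finish an in-flight computation.) -/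
/-- With `n` workers of speeds `0 < τ₁ ≤ ⋯ ≤ τ_n` (indexed here by
`i ∈ {0, …, n−1}`, so that worker `i` corresponds to the paper's worker `i+1`) and
`t = 2·min_{m∈[n]} (∑_{i=1}^m 1/τ_i)⁻¹ (B + m)`, the workers can jointly produce at
least `B` new gradients within `t` seconds: `∑_{i=1}^n max{⌊t/τ_i⌋ − 1, 0} ≥ B`. -/
theorem time_to_collect_batch
    (n : ℕ) (hn : 1 ≤ n) (τ : ℕ → ℝ)
    (hpos : ∀ i, i < n → 0 < τ i)
    (hmono : ∀ i j, i ≤ j → j < n → τ i ≤ τ j)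
    (B : ℕ) (hB : 1 ≤ B)
    (t : ℝ)
    (ht : t = 2 * (Finset.range n).inf' (Finset.nonempty_range_iff.mpr (by omega))
        (fun m => (∑ i ∈ Finset.range (m + 1), (τ i)⁻¹)⁻¹ * ((B : ℝ) + (m + 1)))) :
    (B : ℤ) ≤ ∑ i ∈ Finset.range n, max (⌊t / τ i⌋ - 1) 0 := by
  obtain ⟨m, hm, hmin⟩ := Finset.exists_mem_eq_inf' (s := Finset.range n)
    (Finset.nonempty_range_iff.mpr (by omega))
    (fun m : ℕ => (∑ i ∈ Finset.range (m + 1), (τ i)⁻¹)⁻¹ * ((B : ℝ) + (m + 1)))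
  rw [hmin] at ht
  have hmn : m < n := Finset.mem_range.mp hm
  have hS : 0 < ∑ i ∈ Finset.range (m + 1), (τ i)⁻¹ := by
    apply Finset.sum_pos
    · intro i hi
      exact inv_pos.mpr (hpos i (by have := Finset.mem_range.mp hi; omega))
    · exact ⟨0, by simp⟩
  have hsum : ∑ i ∈ Finset.range (m + 1), t / τ i = 2 * ((B : ℝ) + (m + 1)) := by
    simp only [div_eq_mul_inv]
    rw [← Finset.mul_sum, ht]
    generalize (∑ i ∈ Finset.range (m + 1), (τ i)⁻¹) = S at hS
    field_simp
  have h1 : ∑ i ∈ Finset.range (m + 1), max (⌊t / τ i⌋ - 1) 0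
      ≤ ∑ i ∈ Finset.range n, max (⌊t / τ i⌋ - 1) 0 := by
    apply Finset.sum_le_sum_of_subset_of_nonneg
    · intro i hi
      have := Finset.mem_range.mp hi
      exact Finset.mem_range.mpr (by omega)
    · intro i _ _
      exact le_max_right _ _
  refine le_trans ?_ h1
  have h2 : ∑ i ∈ Finset.range (m + 1), (t / τ i - 2)
      ≤ ∑ i ∈ Finset.range (m + 1), ((max (⌊t / τ i⌋ - 1) 0 : ℤ) : ℝ) := by
    apply Finset.sum_le_sum
    intro i _
    have h3 : ((⌊t / τ i⌋ - 1 : ℤ) : ℝ) ≤ ((max (⌊t / τ i⌋ - 1) 0 : ℤ) : ℝ) :=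
      Int.cast_le.mpr (le_max_left _ _)
    have h4 := Int.lt_floor_add_one (t / τ i)
    rw [Int.cast_sub, Int.cast_one] at h3
    linarith
  rw [Finset.sum_sub_distrib, hsum, ← Int.cast_sum] at h2
  simp only [Finset.sum_const, Finset.card_range, nsmul_eq_mul] at h2
  have hB0 : (0 : ℝ) ≤ B := Nat.cast_nonneg B
  rw [← Int.cast_le (R := ℝ)]
  refine le_trans ?_ h2
  push_cast
  linarith
end

section
/- For every integer T ≥ 1, the hard-instance chain function satisfies F_T(0) − inf_{x∈ℝ^T} F_T(x) ≤ 12·T. -/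
open MeasureTheory

/-- The scalar function `Ψ` of the hard-instance construction. -/
noncomputable def Psi (t : ℝ) : ℝ :=
  if t ≤ 1 / 2 then 0 else Real.exp (1 - 1 / (2 * t - 1) ^ 2)

/-- The scalar function `Φ(t) = √e ∫_{−∞}^t e^{−τ²/2} dτ` of the hard-instance
construction. -/
noncomputable def Phi (t : ℝ) : ℝ :=
  Real.sqrt (Real.exp 1) * ∫ τ in Set.Iic t, Real.exp (-τ ^ 2 / 2)

/-- The hard-instance chain function `F_T` on `ℝ^{T+1}` (so the paper's dimension `T ≥ 1`
is `T + 1` here; the paper's coordinate `xᵢ`, `1 ≤ i ≤ T`, is the zero-based coordinate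
`x (i−1)`). -/
noncomputable def chainF (T : ℕ) (x : EuclideanSpace ℝ (Fin (T + 1))) : ℝ :=
  -Psi 1 * Phi (x 0) +
    ∑ i : Fin T,
      (Psi (-(x i.castSucc)) * Phi (-(x i.succ)) - Psi (x i.castSucc) * Phi (x i.succ))

/-- `prog α x` is the largest one-based index `i ∈ {0, 1, …, n}` such that `|xᵢ| > α`
(with the paper's convention `x₀ ≡ 1`, so the value `0` is allowed and returned when no
coordinate exceeds `α`). -/
noncomputable def prog {n : ℕ} (α : ℝ) (x : EuclideanSpace ℝ (Fin n)) : ℕ :=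
  (Finset.univ.filter fun i : Fin n => α < |x i|).sup fun i => (i : ℕ) + 1

theorem Psi_nonneg' (t : ℝ) : 0 ≤ Psi t := by
  unfold Psi; split_ifs <;> positivity

theorem Psi_le' (t : ℝ) : Psi t ≤ Real.exp 1 := by
  unfold Psi; split_ifs
  · positivity
  · apply Real.exp_le_exp.2
    have : 0 ≤ 1 / (2 * t - 1) ^ 2 := by positivity
    linarith

theorem Phi_nonneg' (t : ℝ) : 0 ≤ Phi t := by
  unfold Phi
  exact mul_nonneg (Real.sqrt_nonneg _) (integral_nonneg fun _ => (Real.exp_pos _).le)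

theorem Phi_le' (t : ℝ) : Phi t ≤ Real.sqrt (Real.exp 1) * Real.sqrt (2 * Real.pi) := by
  unfold Phi
  apply mul_le_mul_of_nonneg_left _ (Real.sqrt_nonneg _)
  have e : (fun τ : ℝ => Real.exp (-τ ^ 2 / 2)) = fun τ => Real.exp (-(1 / 2) * τ ^ 2) := by
    funext τ; congr 1; ring
  rw [e]
  have hi : Integrable (fun τ : ℝ => Real.exp (-(1 / 2) * τ ^ 2)) :=
    integrable_exp_neg_mul_sq (by norm_num)
  have h := integral_gaussian (1 / 2)
  have h2 : Real.pi / (1 / 2) = 2 * Real.pi := by ring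
  rw [h2] at h
  rw [← h]
  exact setIntegral_le_integral hi (Filter.Eventually.of_forall fun _ => (Real.exp_pos _).le)

theorem Psi_mul_Phi_le' (s t : ℝ) : Psi s * Phi t ≤ 12 := by
  have h1 : Psi s * Phi t ≤
      Real.exp 1 * (Real.sqrt (Real.exp 1) * Real.sqrt (2 * Real.pi)) :=
    mul_le_mul (Psi_le' s) (Phi_le' t) (Phi_nonneg' t) (Real.exp_pos _).le
  refine h1.trans ?_
  have he := Real.exp_one_lt_d9
  have hp := Real.pi_lt_d2
  have hpp := Real.pi_pos
  have hep := Real.exp_pos 1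
  refine abs_le_of_sq_le_sq' ?_ (by norm_num) |>.2
  rw [mul_pow, mul_pow, Real.sq_sqrt hep.le, Real.sq_sqrt (by positivity)]
  have h3 : Real.exp 1 ^ 3 ≤ 2.72 ^ 3 := by gcongr; linarith
  have h4 : Real.exp 1 ^ 3 * (2 * Real.pi) ≤ 2.72 ^ 3 * (2 * 3.15) := by gcongr
  calc _ = Real.exp 1 ^ 3 * (2 * Real.pi) := by ring
    _ ≤ _ := h4
    _ ≤ _ := by norm_num

theorem chainF_zero_sub_inf_le (T : ℕ) :
    chainF T 0 - ⨅ x : EuclideanSpace ℝ (Fin (T + 1)), chainF T x ≤ 12 * (T + 1) := by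
  have h0 : chainF T 0 ≤ 0 := by
    have hP : Psi 0 = 0 := by simp [Psi]
    have := mul_nonneg (Psi_nonneg' 1) (Phi_nonneg' 0)
    simp [chainF, hP]
    linarith
  have hx : ∀ x : EuclideanSpace ℝ (Fin (T + 1)), -(12 * ((T : ℝ) + 1)) ≤ chainF T x := by
    intro x
    unfold chainF
    have h1 := Psi_mul_Phi_le' 1 (x 0)
    have h2 : ∑ i : Fin T, (-12 : ℝ) ≤ ∑ i : Fin T,
      (Psi (-(x i.castSucc)) * Phi (-(x i.succ)) - Psi (x i.castSucc) * Phi (x i.succ)) := by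
      apply Finset.sum_le_sum
      intro i _
      have := Psi_mul_Phi_le' (x i.castSucc) (x i.succ)
      have := mul_nonneg (Psi_nonneg' (-(x i.castSucc))) (Phi_nonneg' (-(x i.succ)))
      linarith
    simp only [Finset.sum_const, Finset.card_univ, Fintype.card_fin, nsmul_eq_mul] at h2
    linarith
  have := le_ciInf hx
  linarith
end

section
/- For every integer T ≥ 1, the gradient of the hard-instance chain function F_T is 152-Lipschitz: ‖∇F_T(x) − ∇F_T(y)‖ ≤ 152·‖x − y‖ for all x, y ∈ ℝ^T, where ‖·‖ is the Euclidean norm. -/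
open MeasureTheory

noncomputable def Gk (k : ℕ) (u : ℝ) : ℝ :=
  if u ≤ 0 then 0 else (u⁻¹) ^ k * Real.exp (1 - (u⁻¹) ^ 2)

lemma Gk_nonpos (k : ℕ) {u : ℝ} (h : u ≤ 0) : Gk k u = 0 := if_pos h

lemma Gk_pos (k : ℕ) {u : ℝ} (h : 0 < u) :
    Gk k u = (u⁻¹) ^ k * Real.exp (1 - (u⁻¹) ^ 2) := if_neg (not_le.mpr h)

lemma Gk_nonneg (k : ℕ) (u : ℝ) : 0 ≤ Gk k u := by
  rcases le_or_gt u 0 with h | h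
  · rw [Gk_nonpos k h]
  · rw [Gk_pos k h]; positivity

lemma Gk_bound (n : ℕ) (u : ℝ) : Gk n u ≤ n.factorial * Real.exp 2 := by
  rcases le_or_gt u 0 with h | h
  · rw [Gk_nonpos _ h]; positivity
  · rw [Gk_pos _ h]
    set v := u⁻¹ with hv
    have hv0 : 0 < v := inv_pos.mpr h
    have h1 := Real.pow_div_factorial_le_exp v hv0.le n
    have hf : (0:ℝ) < n.factorial := by exact_mod_cast n.factorial_pos
    rw [div_le_iff₀ hf] at h1
    have h2 : Real.exp (1 - v ^ 2) ≤ Real.exp (2 - v) := by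
      apply Real.exp_le_exp.mpr; nlinarith [sq_nonneg (v - 1)]
    calc v ^ n * Real.exp (1 - v ^ 2) ≤ (Real.exp v * n.factorial) * Real.exp (2 - v) := by gcongr
      _ = n.factorial * (Real.exp v * Real.exp (2 - v)) := by ring
      _ = _ := by rw [← Real.exp_add]; ring_nf

lemma Gk_shift (k : ℕ) (u : ℝ) : Gk k u = Gk (k + 2) u * u ^ 2 := by
  rcases le_or_gt u 0 with h | h
  · rw [Gk_nonpos _ h, Gk_nonpos _ h]; ring
  · rw [Gk_pos _ h, Gk_pos _ h, pow_add]; field_simp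

lemma Gk_hasDerivAt (k : ℕ) (u : ℝ) :
    HasDerivAt (Gk k) (2 * Gk (k + 3) u - k * Gk (k + 1) u) u := by
  rcases lt_trichotomy u 0 with h | h | h
  · rw [Gk_nonpos _ h.le, Gk_nonpos _ h.le]
    have : HasDerivAt (fun _ : ℝ => (0:ℝ)) 0 u := hasDerivAt_const u 0
    refine HasDerivAt.congr_deriv (this.congr_of_eventuallyEq ?_) ?_
    rotate_left
    · ring
    · filter_upwards [eventually_lt_nhds h] with x hx
      exact Gk_nonpos _ hx.le
  · subst h
    rw [Gk_nonpos _ le_rfl, Gk_nonpos _ le_rfl]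
    have hz : (2 * 0 - (k:ℝ) * 0) = 0 := by ring
    rw [hz, hasDerivAt_iff_isLittleO_nhds_zero]
    simp only [zero_add, Gk_nonpos k le_rfl, sub_zero, smul_zero]
    have hO : (fun h => Gk k h) =O[nhds 0] (fun h : ℝ => h ^ 2) := by
      apply Asymptotics.IsBigO.of_bound (((k+2).factorial : ℝ) * Real.exp 2)
      filter_upwards with x
      rw [Gk_shift, norm_mul, Real.norm_of_nonneg (Gk_nonneg _ _)]
      gcongr
      exact Gk_bound _ _
    exact hO.trans_isLittleO (Asymptotics.isLittleO_pow_id one_lt_two)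
  · rw [Gk_pos _ h, Gk_pos _ h]
    have hi : HasDerivAt (fun x : ℝ => x⁻¹) (-(u^2)⁻¹) u := hasDerivAt_inv h.ne'
    have := (hi.pow k).mul (((hi.pow 2).const_sub 1).exp)
    refine HasDerivAt.congr_deriv (this.congr_of_eventuallyEq ?_) ?_
    rotate_left
    · simp only [Pi.pow_apply]
      rcases k with _ | k
      · simp; field_simp
      · simp; field_simp; ring
    · filter_upwards [eventually_gt_nhds h] with x hx
      rw [Gk_pos _ hx]; rfl

noncomputable def Psi1 (t : ℝ) : ℝ := 4 * Gk 3 (2 * t - 1)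
noncomputable def Psi2 (t : ℝ) : ℝ := 8 * (2 * Gk 6 (2 * t - 1) - 3 * Gk 4 (2 * t - 1))

lemma Psi_eq (t : ℝ) : Psi t = Gk 0 (2 * t - 1) := by
  unfold Psi Gk
  by_cases h : t ≤ 1 / 2
  · rw [if_pos h, if_pos (by linarith)]
  · rw [if_neg h, if_neg (by linarith)]; simp

lemma aff (t : ℝ) : HasDerivAt (fun t : ℝ => 2 * t - 1) 2 t := by
  simpa using ((hasDerivAt_id t).const_mul (2:ℝ)).sub_const 1

lemma Psi_hasDerivAt (t : ℝ) : HasDerivAt Psi (Psi1 t) t := by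
  have h := (Gk_hasDerivAt 0 (2 * t - 1)).comp t (aff t)
  have e : Psi = (Gk 0 ∘ fun t : ℝ => 2 * t - 1) := by funext t; exact Psi_eq t
  rw [e]; refine HasDerivAt.congr_deriv (h) ?_; simp [Psi1]; ring

lemma Psi1_hasDerivAt (t : ℝ) : HasDerivAt Psi1 (Psi2 t) t := by
  have h := ((Gk_hasDerivAt 3 (2 * t - 1)).comp t (aff t)).const_mul 4
  refine HasDerivAt.congr_deriv (h) ?_; simp [Psi2]; ring

lemma Psi_zero {t : ℝ} (h : t ≤ 0) : Psi t = 0 := by rw [Psi_eq, Gk_nonpos _ (by linarith)]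
lemma Psi1_zero {t : ℝ} (h : t ≤ 0) : Psi1 t = 0 := by
  rw [Psi1, Gk_nonpos _ (by linarith)]; ring
lemma Psi2_zero {t : ℝ} (h : t ≤ 0) : Psi2 t = 0 := by
  rw [Psi2, Gk_nonpos _ (by linarith), Gk_nonpos _ (by linarith)]; ring

lemma e_lt : Real.exp 1 < 2.7182818286 := Real.exp_one_lt_d9
lemma e_gt : 2.7182818283 < Real.exp 1 := Real.exp_one_gt_d9

lemma Psi_bound (t : ℝ) : |Psi t| ≤ 2.7183 := by
  rw [Psi_eq, abs_of_nonneg (Gk_nonneg _ _)]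
  rcases le_or_gt (2 * t - 1) 0 with h | h
  · rw [Gk_nonpos _ h]; norm_num
  · rw [Gk_pos _ h]
    have : Real.exp (1 - ((2 * t - 1)⁻¹) ^ 2) ≤ Real.exp 1 := by
      apply Real.exp_le_exp.mpr; nlinarith [sq_nonneg ((2 * t - 1)⁻¹)]
    simp only [pow_zero, one_mul]
    linarith [e_lt]

lemma Psi1_bound (t : ℝ) : |Psi1 t| * Real.sqrt (Real.exp 1) ≤ 7.349 := by
  rw [Psi1, abs_of_nonneg (by have := Gk_nonneg 3 (2*t-1); positivity)]
  rcases le_or_gt (2 * t - 1) 0 with h | h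
  · rw [Gk_nonpos _ h]; norm_num
  · rw [Gk_pos _ h]
    set v := (2 * t - 1)⁻¹ with hv
    have hv0 : 0 < v := inv_pos.mpr h
    have h1 : v ^ 2 * (2/3) ≤ Real.exp (v ^ 2 * (2/3) - 1) := by
      linarith [Real.add_one_le_exp (v ^ 2 * (2/3) - 1)]
    have h2 : (v ^ 2 * (2/3)) ^ 3 ≤ Real.exp (2 * v ^ 2 - 3) := by
      calc _ ≤ (Real.exp (v ^ 2 * (2/3) - 1)) ^ 3 := by gcongr
        _ = _ := by rw [← Real.exp_nat_mul]; congr 1; push_cast; ring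
    apply abs_le_of_sq_le_sq' _ (by norm_num) |>.2
    have h3 : (4 * (v ^ 3 * Real.exp (1 - v ^ 2)) * Real.sqrt (Real.exp 1)) ^ 2
        = 54 * (v ^ 2 * (2/3)) ^ 3 * Real.exp (3 - 2 * v ^ 2) := by
      rw [mul_pow, Real.sq_sqrt (Real.exp_pos 1).le]
      have : Real.exp (3 - 2 * v ^ 2) = Real.exp (1 - v^2) ^ 2 * Real.exp 1 := by
        rw [← Real.exp_nat_mul, ← Real.exp_add]; congr 1; push_cast; ring
      rw [this]; ring
    rw [h3]
    calc 54 * (v ^ 2 * (2/3)) ^ 3 * Real.exp (3 - 2 * v ^ 2)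
        ≤ 54 * Real.exp (2 * v ^ 2 - 3) * Real.exp (3 - 2 * v ^ 2) := by gcongr
      _ = 54 := by rw [mul_assoc, ← Real.exp_add]; simp
      _ ≤ _ := by norm_num

lemma Psi2_bound (t : ℝ) : |Psi2 t| ≤ 32.5 := by
  rcases le_or_gt (2 * t - 1) 0 with h | h
  · rw [Psi2, Gk_nonpos _ h, Gk_nonpos _ h]; norm_num
  · rw [Psi2, Gk_pos _ h, Gk_pos _ h]
    set v := (2 * t - 1)⁻¹ with hv
    obtain ⟨s, hs⟩ : ∃ s, s = v ^ 2 := ⟨_, rfl⟩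
    have hs0 : 0 ≤ s := by rw [hs]; positivity
    have h0 : 8 * (2 * (v ^ 6 * Real.exp (1 - v ^ 2)) - 3 * (v ^ 4 * Real.exp (1 - v ^ 2)))
        = 8 * (s ^ 2 * (2 * s - 3) * Real.exp (1 - s)) := by rw [hs]; ring
    rw [h0, abs_le]
    constructor
    · have h1 : s ^ 2 * (3 - 2 * s) ≤ 1 := by
        nlinarith [mul_nonneg hs0 (sq_nonneg (s - 1)), sq_nonneg (s - 1)]
      have h2 : Real.exp (1 - s) ≤ Real.exp 1 := Real.exp_le_exp.mpr (by linarith)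
      have h3 := Real.exp_pos (1 - s)
      nlinarith [e_lt]
    · have hE := Real.exp_pos (1 - s)
      rcases le_or_gt s (3/2) with h3 | h3
      · have : s ^ 2 * (2 * s - 3) ≤ 0 := mul_nonpos_of_nonneg_of_nonpos (sq_nonneg s) (by linarith)
        nlinarith
      have h1 : s * (3/11) ≤ Real.exp (s * (3/11) - 1) := by
        linarith [Real.add_one_le_exp (s * (3/11) - 1)]
      have h2 : (2 * s - 3) * (5/22) ≤ Real.exp ((2 * s - 3) * (5/22) - 1) := by
        linarith [Real.add_one_le_exp ((2 * s - 3) * (5/22) - 1)]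
      have h4 : s ^ 2 * (2 * s - 3) * Real.exp (1 - s) ≤ (121/9 * (22/5)) * Real.exp (-(59/22)) := by
        calc s ^ 2 * (2 * s - 3) * Real.exp (1 - s)
            = (121/9 * (22/5)) * ((s * (3/11)) ^ 2 * ((2 * s - 3) * (5/22)) * Real.exp (1 - s)) := by ring
          _ ≤ (121/9 * (22/5)) * (Real.exp (s * (3/11) - 1) ^ 2 * Real.exp ((2 * s - 3) * (5/22) - 1) * Real.exp (1 - s)) := by
              gcongr
              linarith
          _ = _ := by
              rw [← Real.exp_nat_mul, ← Real.exp_add, ← Real.exp_add]; congr 2; push_cast; ring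
      have h5 : (14.57:ℝ) ≤ Real.exp (59/22) := by
        have : (14.57:ℝ) ^ 22 ≤ Real.exp (59/22) ^ 22 := by
          rw [← Real.exp_nat_mul]
          have : ((22:ℕ):ℝ) * (59/22) = (59:ℕ) * 1 := by norm_num
          rw [this, Real.exp_nat_mul]
          calc (14.57:ℝ) ^ 22 ≤ 2.718 ^ 59 := by norm_num
            _ ≤ _ := by gcongr; linarith [e_gt]
        exact le_of_pow_le_pow_left₀ (by norm_num) (Real.exp_pos _).le this
      have h6 : Real.exp (-(59/22)) ≤ 1 / 14.57 := by
        rw [Real.exp_neg, ← one_div]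
        exact one_div_le_one_div_of_le (by norm_num) h5
      calc 8 * (s ^ 2 * (2 * s - 3) * Real.exp (1 - s)) ≤ 8 * ((121/9 * (22/5)) * (1 / 14.57)) := by
            have := mul_le_mul_of_nonneg_left h6 (by norm_num : (0:ℝ) ≤ 121/9 * (22/5))
            linarith
        _ ≤ _ := by norm_num

noncomputable def Phi1 (t : ℝ) : ℝ := Real.sqrt (Real.exp 1) * Real.exp (-t ^ 2 / 2)
noncomputable def Phi2 (t : ℝ) : ℝ := - (Real.sqrt (Real.exp 1) * (t * Real.exp (-t ^ 2 / 2)))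

lemma gauss_eq : (fun τ : ℝ => Real.exp (-τ ^ 2 / 2)) = fun τ => Real.exp (-(1/2) * τ ^ 2) := by
  funext τ; congr 1; ring

lemma gauss_int : Integrable (fun τ : ℝ => Real.exp (-τ ^ 2 / 2)) := by
  rw [gauss_eq]; exact integrable_exp_neg_mul_sq (by norm_num)

lemma Phi_hasDerivAt (t : ℝ) : HasDerivAt Phi (Phi1 t) t := by
  have hc : Continuous (fun τ : ℝ => Real.exp (-τ ^ 2 / 2)) := by fun_prop
  have h1 : HasDerivAt (fun u => ∫ τ in (0:ℝ)..u, Real.exp (-τ ^ 2 / 2)) (Real.exp (-t ^ 2 / 2)) t :=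
    hc.integral_hasStrictDerivAt 0 t |>.hasDerivAt
  have h2 := (h1.const_add (∫ τ in Set.Iic (0:ℝ), Real.exp (-τ ^ 2 / 2))).const_mul (Real.sqrt (Real.exp 1))
  have e : Phi = fun u => Real.sqrt (Real.exp 1) * ((∫ τ in Set.Iic (0:ℝ), Real.exp (-τ ^ 2 / 2)) + ∫ τ in (0:ℝ)..u, Real.exp (-τ ^ 2 / 2)) := by
    funext u
    rw [Phi, ← intervalIntegral.integral_Iic_sub_Iic gauss_int.integrableOn gauss_int.integrableOn]
    ring
  rw [e]; exact h2

lemma Phi1_hasDerivAt (t : ℝ) : HasDerivAt Phi1 (Phi2 t) t := by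
  have h : HasDerivAt (fun t : ℝ => -t ^ 2 / 2) (-t) t := by
    refine HasDerivAt.congr_deriv (((hasDerivAt_id t).pow 2).neg.div_const 2) ?_
    simp; ring
  refine HasDerivAt.congr_deriv (h.exp.const_mul (Real.sqrt (Real.exp 1))) ?_
  rw [Phi2]; ring

lemma Phi_bound (t : ℝ) : |Phi t| ≤ 4.133 := by
  have hn : 0 ≤ ∫ τ in Set.Iic t, Real.exp (-τ ^ 2 / 2) :=
    integral_nonneg fun _ => (Real.exp_pos _).le
  have hle : ∫ τ in Set.Iic t, Real.exp (-τ ^ 2 / 2) ≤ Real.sqrt (2 * Real.pi) := by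
    calc _ ≤ ∫ τ : ℝ, Real.exp (-τ ^ 2 / 2) :=
          setIntegral_le_integral gauss_int (Filter.Eventually.of_forall fun _ => (Real.exp_pos _).le)
      _ = _ := by
        rw [gauss_eq, integral_gaussian]; congr 1; ring
  rw [Phi, abs_of_nonneg (by positivity)]
  calc _ ≤ Real.sqrt (Real.exp 1) * Real.sqrt (2 * Real.pi) := by gcongr
    _ = Real.sqrt (Real.exp 1 * (2 * Real.pi)) := by rw [Real.sqrt_mul (Real.exp_pos 1).le]
    _ ≤ _ := by
      apply Real.sqrt_le_iff.mpr ⟨by norm_num, ?_⟩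
      calc Real.exp 1 * (2 * Real.pi) ≤ 2.71829 * (2 * 3.1416) := by
            gcongr
            · linarith [e_lt]
            · linarith [Real.pi_lt_d4]
        _ ≤ _ := by norm_num

lemma Phi1_bound (t : ℝ) : |Phi1 t| ≤ Real.sqrt (Real.exp 1) := by
  rw [Phi1, abs_of_nonneg (by positivity)]
  have : Real.exp (-t ^ 2 / 2) ≤ 1 := Real.exp_le_one_iff.mpr (by nlinarith [sq_nonneg t])
  exact mul_le_of_le_one_right (Real.sqrt_nonneg _) this

lemma Phi2_bound (t : ℝ) : |Phi2 t| ≤ 1 := by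
  rw [← sq_le_one_iff_abs_le_one]
  have : Phi2 t ^ 2 = t ^ 2 * Real.exp (1 - t ^ 2) := by
    have e : Real.exp (1 - t ^ 2) = Real.exp 1 * Real.exp (-t ^ 2 / 2) ^ 2 := by
      rw [← Real.exp_nat_mul, ← Real.exp_add]; congr 1; push_cast; ring
    rw [Phi2, neg_sq, mul_pow, Real.sq_sqrt (Real.exp_pos 1).le, e]; ring
  rw [this]
  have h : t ^ 2 ≤ Real.exp (t ^ 2 - 1) := by linarith [Real.add_one_le_exp (t ^ 2 - 1)]
  calc t ^ 2 * Real.exp (1 - t ^ 2) ≤ Real.exp (t ^ 2 - 1) * Real.exp (1 - t ^ 2) := by gcongr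
    _ = 1 := by rw [← Real.exp_add]; simp

/-- Combining the two half-lines: at most one summand is nonzero. -/
lemma two_side (f : ℝ → ℝ) (hf : ∀ t ≤ 0, f t = 0) (C : ℝ) (t a b : ℝ)
    (ha : ∀ s, |f s| * |a| ≤ C) (hb : ∀ s, |f s| * |b| ≤ C) : |f (-t) * a - f t * b| ≤ C := by
  rcases le_total t 0 with h | h
  · rw [hf t h]; simpa [abs_mul] using ha (-t)
  · rw [hf (-t) (by linarith)]; simpa [abs_mul] using hb t

lemma lip {f f' : ℝ → ℝ} {C : ℝ} (h : ∀ t, HasDerivAt f (f' t) t) (hb : ∀ t, |f' t| ≤ C) (a b : ℝ) :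
    |f a - f b| ≤ C * |a - b| := by
  have := Convex.norm_image_sub_le_of_norm_hasDerivWithin_le (f := f) (f' := f') (s := Set.univ)
    (fun x _ => (h x).hasDerivWithinAt) (fun x _ => hb x) convex_univ (Set.mem_univ b) (Set.mem_univ a)
  simpa using this

noncomputable def H1 (x y : ℝ) : ℝ := -(Psi1 (-x) * Phi (-y)) - Psi1 x * Phi y
noncomputable def H2 (x y : ℝ) : ℝ := -(Psi (-x) * Phi1 (-y)) - Psi x * Phi1 y

lemma cneg {f : ℝ → ℝ} {f' t : ℝ} (h : HasDerivAt f f' (-t)) :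
    HasDerivAt (fun t => f (-t)) (-f') t := by
  have := h.comp t (hasDerivAt_neg t)
  simpa [Function.comp_def] using this

lemma mixed_bound (x y : ℝ) : |Psi1 (-x) * Phi1 (-y) - Psi1 x * Phi1 y| ≤ 7.349 := by
  apply two_side Psi1 (fun t h => Psi1_zero h)
  all_goals
    intro s
    exact (mul_le_mul_of_nonneg_left (Phi1_bound _) (abs_nonneg _)).trans (Psi1_bound s)

lemma H1_bound (a b c d : ℝ) :
    |H1 a b - H1 c d| ≤ 134.3225 * |a - c| + 7.349 * |b - d| := by
  have h1 : |H1 a b - H1 c b| ≤ 134.3225 * |a - c| := by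
    apply lip (f := fun t => H1 t b) (f' := fun t => Psi2 (-t) * Phi (-b) - Psi2 t * Phi b)
    · intro t
      refine HasDerivAt.congr_deriv ((((cneg (Psi1_hasDerivAt (-t))).mul_const (Phi (-b))).neg).sub
        ((Psi1_hasDerivAt t).mul_const (Phi b))) ?_
      ring
    · intro t
      apply two_side Psi2 (fun t h => Psi2_zero h)
      all_goals
        intro s
        calc _ ≤ (32.5:ℝ) * 4.133 :=
              mul_le_mul (Psi2_bound s) (Phi_bound _) (abs_nonneg _) (by norm_num)
          _ ≤ _ := by norm_num
  have h2 : |H1 c b - H1 c d| ≤ 7.349 * |b - d| := by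
    apply lip (f := fun t => H1 c t) (f' := fun t => Psi1 (-c) * Phi1 (-t) - Psi1 c * Phi1 t)
    · intro t
      refine HasDerivAt.congr_deriv ((((cneg (Phi_hasDerivAt (-t))).const_mul (Psi1 (-c))).neg).sub
        ((Phi_hasDerivAt t).const_mul (Psi1 c))) ?_
      ring
    · intro t; exact mixed_bound c t
  linarith [abs_sub_le (H1 a b) (H1 c b) (H1 c d)]

lemma H2_bound (a b c d : ℝ) :
    |H2 a b - H2 c d| ≤ 7.349 * |a - c| + 2.7183 * |b - d| := by
  have h1 : |H2 a b - H2 c b| ≤ 7.349 * |a - c| := by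
    apply lip (f := fun t => H2 t b) (f' := fun t => Psi1 (-t) * Phi1 (-b) - Psi1 t * Phi1 b)
    · intro t
      refine HasDerivAt.congr_deriv ((((cneg (Psi_hasDerivAt (-t))).mul_const (Phi1 (-b))).neg).sub
        ((Psi_hasDerivAt t).mul_const (Phi1 b))) ?_
      ring
    · intro t; exact mixed_bound t b
  have h2 : |H2 c b - H2 c d| ≤ 2.7183 * |b - d| := by
    apply lip (f := fun t => H2 c t) (f' := fun t => Psi (-c) * Phi2 (-t) - Psi c * Phi2 t)
    · intro t
      refine HasDerivAt.congr_deriv ((((cneg (Phi1_hasDerivAt (-t))).const_mul (Psi (-c))).neg).sub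
        ((Phi1_hasDerivAt t).const_mul (Psi c))) ?_
      ring
    · intro t
      apply two_side Psi (fun t h => Psi_zero h)
      all_goals
        intro s
        calc _ ≤ (2.7183:ℝ) * 1 :=
              mul_le_mul (Psi_bound s) (Phi2_bound _) (abs_nonneg _) (by norm_num)
          _ ≤ _ := by norm_num
  linarith [abs_sub_le (H2 a b) (H2 c b) (H2 c d)]

noncomputable def chainD (T : ℕ) (x : EuclideanSpace ℝ (Fin (T + 1))) :
    EuclideanSpace ℝ (Fin (T + 1)) →L[ℝ] ℝ :=
  (-Psi 1 * Phi1 (x 0)) • EuclideanSpace.proj (𝕜 := ℝ) (0 : Fin (T+1)) +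
    ∑ i : Fin T, (H1 (x i.castSucc) (x i.succ) • EuclideanSpace.proj (𝕜 := ℝ) i.castSucc
      + H2 (x i.castSucc) (x i.succ) • EuclideanSpace.proj (𝕜 := ℝ) i.succ)

lemma chainD_apply (T : ℕ) (x v : EuclideanSpace ℝ (Fin (T + 1))) :
    chainD T x v = (-Psi 1 * Phi1 (x 0)) * v 0 +
      ∑ i : Fin T, (H1 (x i.castSucc) (x i.succ) * v i.castSucc
        + H2 (x i.castSucc) (x i.succ) * v i.succ) := by
  simp [chainD]

lemma chainF_hasFDerivAt (T : ℕ) (x : EuclideanSpace ℝ (Fin (T + 1))) :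
    HasFDerivAt (chainF T) (chainD T x) x := by
  have hp : ∀ j : Fin (T+1), HasFDerivAt (fun x : EuclideanSpace ℝ (Fin (T + 1)) => x j)
      (EuclideanSpace.proj (𝕜 := ℝ) j) x := fun j => (EuclideanSpace.proj (𝕜 := ℝ) j).hasFDerivAt
  unfold chainF chainD
  apply HasFDerivAt.add
  · refine HasFDerivAt.congr_fderiv (((Phi_hasDerivAt (x 0)).comp_hasFDerivAt x (hp 0)).const_mul (-Psi 1)) ?_
    rw [smul_smul]
  · apply HasFDerivAt.fun_sum
    intro i _
    have a1 := (cneg (Psi_hasDerivAt (-(x i.castSucc)))).comp_hasFDerivAt x (hp i.castSucc)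
    have a2 := (cneg (Phi_hasDerivAt (-(x i.succ)))).comp_hasFDerivAt x (hp i.succ)
    have b1 := (Psi_hasDerivAt (x i.castSucc)).comp_hasFDerivAt x (hp i.castSucc)
    have b2 := (Phi_hasDerivAt (x i.succ)).comp_hasFDerivAt x (hp i.succ)
    refine HasFDerivAt.congr_fderiv ((a1.mul a2).sub (b1.mul b2)) ?_
    ext v
    simp [H1, H2]
    ring

lemma cs_bound {n m : ℕ} (d v : EuclideanSpace ℝ (Fin n)) (f g : Fin m → Fin n)
    (hf : Function.Injective f) (hg : Function.Injective g) :
    ∑ i, |d (f i)| * |v (g i)| ≤ ‖d‖ * ‖v‖ := by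
  have key : ∀ (w : EuclideanSpace ℝ (Fin n)) (f : Fin m → Fin n), Function.Injective f →
      Real.sqrt (∑ i, |w (f i)| ^ 2) ≤ ‖w‖ := by
    intro w f hf
    rw [EuclideanSpace.norm_eq]
    apply Real.sqrt_le_sqrt
    simp only [Real.norm_eq_abs]
    calc ∑ i, |w (f i)| ^ 2 = ∑ j ∈ Finset.univ.map ⟨f, hf⟩, |w j| ^ 2 := by
          rw [Finset.sum_map]; rfl
      _ ≤ _ := Finset.sum_le_univ_sum_of_nonneg (fun _ => by positivity)
  calc _ ≤ Real.sqrt (∑ i, |d (f i)| ^ 2) * Real.sqrt (∑ i, |v (g i)| ^ 2) :=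
        Real.sum_mul_le_sqrt_mul_sqrt _ _ _
    _ ≤ _ := mul_le_mul (key d f hf) (key v g hg) (Real.sqrt_nonneg _) (norm_nonneg _)

lemma chainD_diff (T : ℕ) (x y v : EuclideanSpace ℝ (Fin (T + 1))) :
    chainD T x v - chainD T y v ≤ 152 * (‖x - y‖ * ‖v‖) := by
  rw [chainD_apply, chainD_apply]
  have h0 : |(-Psi 1 * Phi1 (x 0)) - (-Psi 1 * Phi1 (y 0))| ≤ 2.7183 * |x 0 - y 0| := by
    apply lip (f := fun t => -Psi 1 * Phi1 t) (f' := fun t => -Psi 1 * Phi2 t)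
    · intro t; exact (Phi1_hasDerivAt t).const_mul _
    · intro t
      rw [abs_mul, abs_neg]
      calc _ ≤ (2.7183:ℝ) * 1 :=
            mul_le_mul (Psi_bound _) (Phi2_bound _) (abs_nonneg _) (by norm_num)
        _ ≤ _ := by norm_num
  set d := x - y with hd
  have hdj : ∀ j, x j - y j = d j := fun j => rfl
  have c1 := cs_bound d v Fin.castSucc Fin.castSucc (Fin.castSucc_injective T) (Fin.castSucc_injective T)
  have c2 := cs_bound d v Fin.castSucc Fin.succ (Fin.castSucc_injective T) (Fin.succ_injective T)
  have c3 := cs_bound d v Fin.succ Fin.castSucc (Fin.succ_injective T) (Fin.castSucc_injective T)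
  have c4 := cs_bound d v id id Function.injective_id Function.injective_id
  rw [Fin.sum_univ_succ] at c4
  simp only [id] at c4
  have mb : ∀ {p q B : ℝ}, |p| ≤ B → p * q ≤ B * |q| := by
    intro p q B h
    calc p * q ≤ |p * q| := le_abs_self _
      _ = |p| * |q| := abs_mul _ _
      _ ≤ _ := by gcongr
  have hs : ∑ i : Fin T, (H1 (x i.castSucc) (x i.succ) * v i.castSucc
        + H2 (x i.castSucc) (x i.succ) * v i.succ) -
      ∑ i : Fin T, (H1 (y i.castSucc) (y i.succ) * v i.castSucc
        + H2 (y i.castSucc) (y i.succ) * v i.succ) ≤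
      134.3225 * ∑ i : Fin T, |d i.castSucc| * |v i.castSucc|
      + 7.349 * ∑ i : Fin T, |d i.succ| * |v i.castSucc|
      + 7.349 * ∑ i : Fin T, |d i.castSucc| * |v i.succ|
      + 2.7183 * ∑ i : Fin T, |d i.succ| * |v i.succ| := by
    rw [← Finset.sum_sub_distrib]
    simp only [Finset.mul_sum]
    rw [← Finset.sum_add_distrib, ← Finset.sum_add_distrib, ← Finset.sum_add_distrib]
    apply Finset.sum_le_sum
    intro i _
    have k1 := mb (q := v i.castSucc) (H1_bound (x i.castSucc) (x i.succ) (y i.castSucc) (y i.succ))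
    have k2 := mb (q := v i.succ) (H2_bound (x i.castSucc) (x i.succ) (y i.castSucc) (y i.succ))
    rw [hdj, hdj] at k1 k2
    linarith
  have k0 := mb (q := v 0) h0
  rw [hdj] at k0
  have hN : 0 ≤ ‖d‖ * ‖v‖ := by positivity
  linarith

/-- The gradient of the chain function `F_T` is `152`-Lipschitz
(Euclidean norm; stated for dimension `T + 1`, i.e. for every paper dimension `T ≥ 1`). -/
theorem chainF_gradient_lipschitz (T : ℕ) :
    ∀ x y : EuclideanSpace ℝ (Fin (T + 1)),
      ‖gradient (chainF T) x - gradient (chainF T) y‖ ≤ 152 * ‖x - y‖ := by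
  intro x y
  have hg : ∀ z v : EuclideanSpace ℝ (Fin (T + 1)),
      inner ℝ (gradient (chainF T) z) v = chainD T z v := by
    intro z v
    rw [gradient, InnerProductSpace.toDual_symm_apply, (chainF_hasFDerivAt T z).fderiv]
  set w := gradient (chainF T) x - gradient (chainF T) y with hw
  have h1 : ‖w‖ * ‖w‖ = chainD T x w - chainD T y w := by
    rw [← real_inner_self_eq_norm_mul_norm, ← hg, ← hg, ← inner_sub_left]
  have h2 := chainD_diff T x y w
  rcases (norm_nonneg w).eq_or_lt with h | h
  · rw [← h]; positivity
  · have : ‖w‖ * ‖w‖ ≤ (152 * ‖x - y‖) * ‖w‖ := by rw [h1]; linarith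
    exact le_of_mul_le_mul_right this h
end

section
/- Let Γ : ℝ → [0,1] be nondecreasing with Γ(t) = 0 for t ≤ 1/4 and Γ(t) = 1 for t ≥ 1/2. For x ∈ ℝ^T and i ∈ {1, …, T}, define Θ_i(x) = Γ( 1 − ‖(Γ(|x_i|), Γ(|x_{i+1}|), …, Γ(|x_T|))‖₂ ), where ‖·‖₂ is the Euclidean norm. Then for all x ∈ ℝ^T and all i, 𝟙{ i > prog_{1/4}(x) } ≤ Θ_i(x) ≤ 𝟙{ i > prog_{1/2}(x) }. -/
/-- For a nondecreasing `Γ : ℝ → [0,1]` vanishing on `(−∞,1/4]` and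
equal to `1` on `[1/2,∞)`, the quantity
`Θ_i(x) = Γ(1 − ‖(Γ(|x_i|), …, Γ(|x_T|))‖₂)` is sandwiched between the indicators
`𝟙{i > prog_{1/4}(x)}` and `𝟙{i > prog_{1/2}(x)}`.  (Coordinates of `x ∈ ℝ^T` are
indexed by `Fin T`; the paper's one-based index of `i : Fin T` is `(i : ℕ) + 1`.) -/
theorem theta_indicator_bounds
    (T : ℕ) (Γ : ℝ → ℝ)
    (hΓmem : ∀ t, Γ t ∈ Set.Icc (0 : ℝ) 1)
    (hΓmono : Monotone Γ)
    (hΓ0 : ∀ t : ℝ, t ≤ 1 / 4 → Γ t = 0)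
    (hΓ1 : ∀ t : ℝ, 1 / 2 ≤ t → Γ t = 1)
    (x : EuclideanSpace ℝ (Fin T)) (i : Fin T) :
    (if prog (1 / 4) x < (i : ℕ) + 1 then (1 : ℝ) else 0)
        ≤ Γ (1 - Real.sqrt (∑ j ∈ Finset.univ.filter fun j : Fin T => i ≤ j,
              Γ |x j| ^ 2))
      ∧ Γ (1 - Real.sqrt (∑ j ∈ Finset.univ.filter fun j : Fin T => i ≤ j,
              Γ |x j| ^ 2))
        ≤ (if prog (1 / 2) x < (i : ℕ) + 1 then (1 : ℝ) else 0) := by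
  have key : ∀ α : ℝ, prog α x < (i : ℕ) + 1 ↔ ∀ j : Fin T, i ≤ j → |x j| ≤ α := by
    intro α
    unfold prog
    rw [Finset.sup_lt_iff (by simp)]
    constructor
    · intro h j hj
      by_contra hc
      have h1 := h j (by simpa using hc)
      have h2 : (i : ℕ) ≤ j := hj
      omega
    · intro h j hj
      by_contra hc
      have h1 : i ≤ j := by
        rw [Fin.le_def]
        omega
      have h2 : α < |x j| := by simpa using hj
      exact absurd (h j h1) (not_le.mpr h2)
  constructor
  · split_ifs with h
    · rw [key] at h
      have hs : (∑ j ∈ Finset.univ.filter fun j : Fin T => i ≤ j, Γ |x j| ^ 2) = 0 := by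
        apply Finset.sum_eq_zero
        intro j hj
        rw [hΓ0 _ (h j (by simpa using hj))]
        norm_num
      rw [hs, hΓ1 _ (by norm_num)]
    · exact (hΓmem _).1
  · split_ifs with h
    · exact (hΓmem _).2
    · rw [key] at h
      push Not at h
      obtain ⟨j, hj, hx⟩ := h
      have hs : (1 : ℝ) ≤ ∑ j ∈ Finset.univ.filter fun j : Fin T => i ≤ j, Γ |x j| ^ 2 := by
        have h1 := Finset.single_le_sum (f := fun j : Fin T => Γ |x j| ^ 2)
          (s := Finset.univ.filter fun j : Fin T => i ≤ j)
          (fun k _ => sq_nonneg _) (by simpa using hj : j ∈ _)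
        simp only [hΓ1 _ hx.le] at h1
        linarith
      have h2 := Real.one_le_sqrt.mpr hs
      exact (hΓ0 _ (by linarith)).le
end
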